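/- Let G^ν = {z ∈ 𝔹₂ : r_ν(z) < 0}, where the r_ν are C² functions on 𝔹̄₂ of the form r_ν(z) = Re(z₂) + |z₁|² + R_ν(z) with |R_ν(z)| ≤ C(|z₂|·|z| + |z|³) for a constant C independent of ν. Let J and J_ν be almost complex structures on a neighborhood of 𝔹̄₂ such that each J_ν(z) and J(z) maps each factor of the splitting ℂ² = ℂ × ℂ into itself, J(0) = J_st, ‖J(z) − J_st‖ ≤ C|z|, and ‖J_ν − J‖_{C²(𝔹̄₂)} → 0. For δ > 0 set Q(0,δ) = {z ∈ ℂ² : |z₁| < √δ, |z₂| < δ}. Then there exist constants C₀ > 0, δ₀ > 0, r₀ > 0 and an index ν₀ such that for every 0 < δ < δ₀, every ν ≥ ν₀ and every J_ν-holomorphic disc g : Δ → G^ν with g(0) ∈ Q(0,δ), one has g({ζ : |ζ| < r₀}) ⊆ Q(0, C₀δ). -/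

import Mathlib

open Metric Set Filter Topology Asymptotics

noncomputable section

/-- The standard complex structure `J_st` (multiplication by `i`) on a complex
normed space, viewed as a real-linear endomorphism. -/
def Jst (E : Type*) [NormedAddCommGroup E] [NormedSpace ℂ E] : E →L[ℝ] E :=
  ContinuousLinearMap.restrictScalars ℝ (Complex.I • ContinuousLinearMap.id ℂ E)

variable {E F : Type*} [NormedAddCommGroup E] [NormedSpace ℂ E]
  [NormedAddCommGroup F] [NormedSpace ℂ F]

/-- `J` is an almost complex structure on the set `Ω`: a smooth field of real-linear
endomorphisms with `J x ∘ J x = -id`. -/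
structure IsACS (Ω : Set E) (J : E → E →L[ℝ] E) : Prop where
  smooth : ContDiffOn ℝ (⊤ : ℕ∞) J Ω
  sq : ∀ x ∈ Ω, (J x).comp (J x) = -(ContinuousLinearMap.id ℝ E)

/-- `f` is `(J', J)`-holomorphic on `s`: `Df(x) ∘ J'(x) = J(f x) ∘ Df(x)`. -/
def IsHolomorphicMapOn (J' : E → E →L[ℝ] E) (J : F → F →L[ℝ] F) (f : E → F)
    (s : Set E) : Prop :=
  ∀ x ∈ s, DifferentiableAt ℝ f x ∧
    (fderiv ℝ f x).comp (J' x) = (J (f x)).comp (fderiv ℝ f x)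

/-- The Levi form `L^J(r)(x)(X) = -d(J⋆dr)(x)(X, J x X)` where `J⋆dr` is the 1-form
`X ↦ dr(x)(J x X)` and `dω(x)(X,Y) = (Dω(x)X)(Y) - (Dω(x)Y)(X)`. -/
def leviForm (J : E → E →L[ℝ] E) (r : E → ℝ) (x : E) (X : E) : ℝ :=
  -((fderiv ℝ (fun y => (fderiv ℝ r y).comp (J y)) x X) (J x X)
    - (fderiv ℝ (fun y => (fderiv ℝ r y).comp (J y)) x (J x X)) X)

/-- `r` is strictly `J`-plurisubharmonic on `s`. -/
def StrictPSHOn (J : E → E →L[ℝ] E) (r : E → ℝ) (s : Set E) : Prop :=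
  ∀ x ∈ s, ∀ X : E, X ≠ 0 → 0 < leviForm J r x X

/-- `r` is `J`-plurisubharmonic on `s` (nonnegative Levi form). -/
def PSHOn (J : E → E →L[ℝ] E) (r : E → ℝ) (s : Set E) : Prop :=
  ∀ x ∈ s, ∀ X : E, 0 ≤ leviForm J r x X

/-- `C⁰` norm of `g` on `K`. -/
def c0Norm {G : Type*} [NormedAddCommGroup G] (g : E → G) (K : Set E) : ℝ :=
  ⨆ x : K, ‖g (x : E)‖

/-- `C¹` norm of `g` on `K`. -/
def c1Norm {G : Type*} [NormedAddCommGroup G] [NormedSpace ℝ G] (g : E → G) (K : Set E) : ℝ :=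
  ⨆ x : K, max ‖g (x : E)‖ ‖fderiv ℝ g (x : E)‖

/-- `C¹` distance between `g` and `h` on `K`. -/
def c1Dist {G : Type*} [NormedAddCommGroup G] [NormedSpace ℝ G] (g h : E → G) (K : Set E) : ℝ :=
  ⨆ x : K, max ‖g (x : E) - h (x : E)‖ ‖fderiv ℝ g (x : E) - fderiv ℝ h (x : E)‖

/-- `C²` distance between `g` and `h` on `K`. -/
def c2Dist {G : Type*} [NormedAddCommGroup G] [NormedSpace ℝ G] (g h : E → G) (K : Set E) : ℝ :=
  ⨆ x : K, max ‖g (x : E) - h (x : E)‖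
    (max ‖fderiv ℝ g (x : E) - fderiv ℝ h (x : E)‖
      ‖fderiv ℝ (fderiv ℝ g) (x : E) - fderiv ℝ (fderiv ℝ h) (x : E)‖)

/-- A `J`-holomorphic disc in `D`: a map from the unit disc `Δ ⊂ ℂ` to `D` satisfying
`Df(ζ) ∘ J_st = J(f ζ) ∘ Df(ζ)`. -/
def IsJDisc (J : F → F →L[ℝ] F) (D : Set F) (f : ℂ → F) : Prop :=
  MapsTo f (ball (0 : ℂ) 1) D ∧
  ∀ ζ ∈ ball (0 : ℂ) 1, DifferentiableAt ℝ f ζ ∧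
    (fderiv ℝ f ζ).comp (Jst ℂ) = (J (f ζ)).comp (fderiv ℝ f ζ)

/-- The Kobayashi–Royden infinitesimal pseudometric of `(D, J)`. -/
def kobayashiMetric (J : F → F →L[ℝ] F) (D : Set F) (p : F) (v : F) : ℝ :=
  sInf {α : ℝ | 0 < α ∧ ∃ f : ℂ → F, IsJDisc J D f ∧ f 0 = p ∧
    fderiv ℝ f 0 1 = α⁻¹ • v}

/-- The integrated Kobayashi pseudodistance of `(D, J)`. -/
def kobayashiDist (J : F → F →L[ℝ] F) (D : Set F) (p q : F) : ℝ :=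
  sInf {d : ℝ | ∃ γ : ℝ → F, ContDiffOn ℝ 1 γ (Icc 0 1) ∧ MapsTo γ (Icc 0 1) D ∧
    γ 0 = p ∧ γ 1 = q ∧ d = ∫ t in (0:ℝ)..1, kobayashiMetric J D (γ t) (deriv γ t)}

/-- `f` is a smooth diffeomorphism from `s` onto `t` with inverse `g`. -/
def IsDiffeoOn (f : E → F) (g : F → E) (s : Set E) (t : Set F) : Prop :=
  ContDiffOn ℝ (⊤ : ℕ∞) f s ∧ ContDiffOn ℝ (⊤ : ℕ∞) g t ∧ MapsTo f s t ∧ MapsTo g t s ∧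
  (∀ x ∈ s, g (f x) = x) ∧ (∀ y ∈ t, f (g y) = y)

/-- The Laplacian of a real function on `ℂ ≅ ℝ²`. -/
def lapR (g : ℂ → ℝ) (ζ : ℂ) : ℝ :=
  fderiv ℝ (fun w => fderiv ℝ g w 1) ζ 1
    + fderiv ℝ (fun w => fderiv ℝ g w Complex.I) ζ Complex.I

/-- The Wirtinger derivative `∂g/∂ζ`. -/
def wirtingerD (g : ℂ → ℂ) (ζ : ℂ) : ℂ :=
  (fderiv ℝ g ζ 1 - Complex.I * fderiv ℝ g ζ Complex.I) / 2

/-- The Wirtinger derivative `∂g/∂ζ̄`. -/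
def wirtingerDbar (g : ℂ → ℂ) (ζ : ℂ) : ℂ :=
  (fderiv ℝ g ζ 1 + Complex.I * fderiv ℝ g ζ Complex.I) / 2

/-- The coordinates of a point of `ℂ²`. -/
def coord2 (z : ℂ × ℂ) : Fin 2 → ℂ := ![z.1, z.2]

abbrev E2 := EuclideanSpace ℂ (Fin 2)

section

open MeasureTheory Complex
open scoped ContDiff

/-- The cross-correlation of two square-integrable functions is continuous. -/
theorem continuous_integral_mul_sub {p q : ℂ → ℝ} (hp : MemLp p 2) (hq : MemLp q 2) :
    Continuous fun s : ℂ => ∫ x, p x * q (x - s) := by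
  let T : ℂ → C(ℂ, ℂ) := fun s => ⟨fun x => x - s, by fun_prop⟩
  have hT : Continuous T := by
    refine ContinuousMap.continuous_of_continuous_uncurry _ ?_
    exact continuous_snd.sub continuous_fst
  have hmp : ∀ s, MeasurePreserving (T s) (volume : Measure ℂ) volume :=
    fun s => measurePreserving_sub_right volume s
  have hc : Continuous fun s => Lp.compMeasurePreserving (T s) (hmp s) (hq.toLp q) :=
    continuous_const.compMeasurePreservingLp hT hmp (by norm_num)
  have hin : Continuous fun s =>
      inner ℝ (Lp.compMeasurePreserving (T s) (hmp s) (hq.toLp q)) (hp.toLp p) :=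
    hc.inner continuous_const
  refine hin.congr fun s => ?_
  rw [L2.inner_def]
  refine integral_congr_ae ?_
  filter_upwards [hp.coeFn_toLp, Lp.coeFn_compMeasurePreserving (hq.toLp q) (hmp s),
    (hmp s).quasiMeasurePreserving.ae_eq_comp hq.coeFn_toLp] with x h1 h2 h3
  rw [h1, h2, h3]
  simp [T]

theorem integral_fderiv_mul_fderiv_comm_of_contDiff {h w : ℂ → ℝ} (hh : Differentiable ℝ h)
    (hch : HasCompactSupport h) (hh1 : Integrable (fderiv ℝ h)) (hw : ContDiff ℝ ∞ w) (a b : ℂ) :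
    ∫ z, fderiv ℝ h z a * fderiv ℝ w z b = ∫ z, fderiv ℝ h z b * fderiv ℝ w z a := by
  have hw' : ContDiff ℝ ∞ (fderiv ℝ w) := hw.fderiv_right (by simp)
  have key : ∀ a b : ℂ, ∫ z, fderiv ℝ h z a * fderiv ℝ w z b =
      -∫ z, h z * fderiv ℝ (fderiv ℝ w) z a b := by
    intro a b
    have hd : ∀ z, fderiv ℝ (fun z => fderiv ℝ w z b) z a = fderiv ℝ (fderiv ℝ w) z a b := by
      intro z
      rw [fderiv_clm_apply (hw'.differentiable (by simp) z) (by fun_prop)]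
      simp
    have hwb : ContDiff ℝ ∞ (fun z => fderiv ℝ w z b) := hw'.clm_apply contDiff_const
    have hwba : Continuous fun z => fderiv ℝ (fun z => fderiv ℝ w z b) z a :=
      ((hwb.continuous_fderiv (by simp)).clm_apply continuous_const)
    have hcs : HasCompactSupport fun z => fderiv ℝ h z a :=
      (hch.fderiv (𝕜 := ℝ)).comp_left (g := fun L : ℂ →L[ℝ] ℝ => L a) (by simp)
    have := integral_mul_fderiv_eq_neg_fderiv_mul_of_integrable (μ := (volume : Measure ℂ))
      (f := h) (g := fun z => fderiv ℝ w z b) (v := a) ?_ ?_ ?_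
      (fun z _ => hh z) (fun z _ => hwb.differentiable (by simp) z)
    · simp_rw [hd] at this
      rw [this, neg_neg]
    · have h1 : Integrable fun z => fderiv ℝ h z a :=
        ContinuousLinearMap.integrable_comp (ContinuousLinearMap.apply ℝ ℝ a) hh1
      refine (integrableOn_iff_integrable_of_support_subset
        ((Function.support_mul_subset_left _ _).trans (subset_tsupport _))).1
        (h1.integrableOn.mul_continuousOn hwb.continuous.continuousOn hcs.isCompact)
    · exact (hh.continuous.mul hwba).integrable_of_hasCompactSupport hch.mul_right
    · exact (hh.continuous.mul hwb.continuous).integrable_of_hasCompactSupport hch.mul_right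
  rw [key, key]
  congr 1
  refine integral_congr_ae (Eventually.of_forall fun z => ?_)
  simp only
  rw [((hw.of_le (m := 2) (WithTop.coe_le_coe.2 le_top)).contDiffAt.isSymmSndFDerivAt (by simp)).eq]

theorem integrable_of_memLp_two_of_hasCompactSupport {V : Type*} [NormedAddCommGroup V]
    {u : ℂ → V} (hc : HasCompactSupport u) (hu : MemLp u 2) : Integrable u := by
  have : IsFiniteMeasure (volume.restrict (tsupport u)) :=
    ⟨by simpa using hc.isCompact.measure_lt_top⟩
  have h1 : IntegrableOn u (tsupport u) := (hu.restrict _).integrable (by norm_num)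
  exact (integrableOn_iff_integrable_of_support_subset (subset_tsupport _)).1 h1

/-- The derivative of the convolution of a bump function with an everywhere differentiable
function can be put on the second factor. -/
theorem fderiv_convolution_apply_eq {η v : ℂ → ℝ} (hη : ContDiff ℝ ∞ η)
    (hcη : HasCompactSupport η) (hv : Differentiable ℝ v) (c : ℂ)
    (hv1 : Integrable fun z => fderiv ℝ v z c) (x : ℂ) :
    fderiv ℝ (convolution η v (ContinuousLinearMap.lsmul ℝ ℝ) volume) x c =
      ∫ s, η s * fderiv ℝ v (x - s) c := by
  have hηv : Differentiable ℝ fun s => v (x - s) := by fun_prop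
  rw [(hcη.hasFDerivAt_convolution_left _ (hη.of_le (by simp))
    hv.continuous.locallyIntegrable x).fderiv]
  have e1 : convolution (fderiv ℝ η) v
      ((ContinuousLinearMap.lsmul ℝ ℝ : ℝ →L[ℝ] ℝ →L[ℝ] ℝ).precompL ℂ) volume x c =
      ∫ s, fderiv ℝ η s c * v (x - s) := by
    have hi := (hcη.fderiv (𝕜 := ℝ)).convolutionExists_left
      ((ContinuousLinearMap.lsmul ℝ ℝ : ℝ →L[ℝ] ℝ →L[ℝ] ℝ).precompL ℂ)
      (hη.continuous_fderiv (by simp)) hv.continuous.locallyIntegrable (μ := volume) x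
    rw [convolution_def, ContinuousLinearMap.integral_apply hi]
    rfl
  have e2 : ∀ s, fderiv ℝ (fun s => v (x - s)) s c = - fderiv ℝ v (x - s) c := by
    intro s
    have : HasFDerivAt (fun s => v (x - s)) _ s :=
      (hv (x - s)).hasFDerivAt.comp s ((hasFDerivAt_id s).const_sub x)
    rw [this.fderiv]; simp
  rw [e1]
  have := integral_mul_fderiv_eq_neg_fderiv_mul_of_integrable (μ := (volume : Measure ℂ))
    (f := η) (g := fun s => v (x - s)) (v := c) ?_ ?_ ?_
    (fun z _ => hη.differentiable (by simp) z) (fun z _ => hηv z)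
  · simp_rw [e2] at this
    rw [← neg_eq_iff_eq_neg] at this
    rw [← this, ← integral_neg]
    simp
  · have hcs : HasCompactSupport fun z => fderiv ℝ η z c :=
      (hcη.fderiv (𝕜 := ℝ)).comp_left (g := fun L : ℂ →L[ℝ] ℝ => L c) (by simp)
    exact (((hη.continuous_fderiv (by simp)).clm_apply continuous_const).mul
      hηv.continuous).integrable_of_hasCompactSupport hcs.mul_right
  · simp_rw [e2]
    have h1 : Integrable fun s => - fderiv ℝ v (x - s) c := (hv1.comp_sub_left x).neg
    exact h1.locallyIntegrable.integrable_smul_left_of_hasCompactSupport hη.continuous hcη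
  · exact (hη.continuous.mul hηv.continuous).integrable_of_hasCompactSupport hcη.mul_right

theorem integral_mul_integral_mul_sub_swap {η p q : ℂ → ℝ} (hη : Continuous η)
    (hcη : HasCompactSupport η) (hp : Integrable p) (hq : Integrable q) :
    ∫ s, η s * ∫ x, p x * q (x - s) = ∫ x, p x * ∫ s, η s * q (x - s) := by
  simp_rw [← integral_const_mul]
  rw [integral_integral_swap]
  · refine integral_congr_ae (Eventually.of_forall fun x => ?_)
    refine integral_congr_ae (Eventually.of_forall fun s => ?_)
    simp only
    ring
  · obtain ⟨M, hM⟩ := hη.bounded_above_of_compact_support hcη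
    have h1 : Integrable (fun z : ℂ × ℂ => p z.2 * q (z.2 - z.1)) (volume.prod volume) := by
      have h2 := (Integrable.convolution_integrand (ContinuousLinearMap.mul ℝ ℝ)
        hp hq.comp_neg (μ := volume) (ν := volume))
      simpa using h2
    refine h1.bdd_mul (c := M) (f := fun z : ℂ × ℂ => η z.1) ?_ ?_
    · exact (hη.comp continuous_fst).aestronglyMeasurable
    · exact Eventually.of_forall fun z => hM z.1

/-- `∫ dh ∧ dv = 0` for compactly supported differentiable functions with square-integrable
gradients. No continuity of the gradients is assumed. -/
theorem integral_fderiv_mul_fderiv_comm {h v : ℂ → ℝ} (hh : Differentiable ℝ h)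
    (hv : Differentiable ℝ v) (hch : HasCompactSupport h) (hcv : HasCompactSupport v)
    (hh2 : MemLp (fderiv ℝ h) 2) (hv2 : MemLp (fderiv ℝ v) 2) (a b : ℂ) :
    ∫ z, fderiv ℝ h z a * fderiv ℝ v z b = ∫ z, fderiv ℝ h z b * fderiv ℝ v z a := by
  have happ : ∀ {u : ℂ → ℝ}, MemLp (fderiv ℝ u) 2 → ∀ c : ℂ,
      MemLp (fun z => fderiv ℝ u z c) 2 := fun hu c =>
    (ContinuousLinearMap.apply ℝ ℝ c : (ℂ →L[ℝ] ℝ) →L[ℝ] ℝ).comp_memLp' hu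
  have hh1 := integrable_of_memLp_two_of_hasCompactSupport (hch.fderiv (𝕜 := ℝ)) hh2
  have hv1 := integrable_of_memLp_two_of_hasCompactSupport (hcv.fderiv (𝕜 := ℝ)) hv2
  have h_apply : ∀ {u : ℂ → ℝ}, Integrable (fderiv ℝ u) → ∀ c : ℂ,
      Integrable (fun z => fderiv ℝ u z c) := fun hu c =>
    ContinuousLinearMap.integrable_comp (ContinuousLinearMap.apply ℝ ℝ c) hu
  set B : ℂ → ℂ → ℂ → ℝ := fun a b s => ∫ x, fderiv ℝ h x a * fderiv ℝ v (x - s) b with hBdef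
  have hB : ∀ a b, Continuous (B a b) := fun a b =>
    continuous_integral_mul_sub (happ hh2 a) (happ hv2 b)
  suffices H : (fun s => B a b s - B b a s) = fun _ => 0 by
    have := congrFun H 0
    simpa [hBdef, sub_eq_zero] using this
  have hcont : Continuous fun s => B a b s - B b a s := (hB a b).sub (hB b a)
  refine Measure.eq_of_ae_eq (μ := volume) ?_ hcont continuous_const
  refine ae_eq_zero_of_integral_contDiff_smul_eq_zero hcont.locallyIntegrable ?_
  intro η hη hcη
  have hw : ContDiff ℝ ∞ (convolution η v (ContinuousLinearMap.lsmul ℝ ℝ) volume) :=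
    hcη.contDiff_convolution_left _ hη hv.continuous.locallyIntegrable
  have swap : ∀ a b, ∫ s, η s * B a b s = ∫ x, fderiv ℝ h x a *
      fderiv ℝ (convolution η v (ContinuousLinearMap.lsmul ℝ ℝ) volume) x b := by
    intro a b
    simp_rw [fderiv_convolution_apply_eq hη hcη hv b (h_apply hv1 b)]
    exact integral_mul_integral_mul_sub_swap hη.continuous hcη (h_apply hh1 a) (h_apply hv1 b)
  have hBint : ∀ a b, Integrable fun s => η s * B a b s := fun a b =>
    (hη.continuous.mul (hB a b)).integrable_of_hasCompactSupport hcη.mul_right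
  simp only [smul_eq_mul, mul_sub]
  rw [integral_sub (hBint a b) (hBint b a), swap, swap,
    integral_fderiv_mul_fderiv_comm_of_contDiff hh hch hh1 hw, sub_self]

/-- The Jacobian determinant of a planar map. -/
noncomputable def planarJacobian (f : ℂ → ℂ) (z : ℂ) : ℝ :=
  (fderiv ℝ f z 1).re * (fderiv ℝ f z I).im - (fderiv ℝ f z I).re * (fderiv ℝ f z 1).im

/-- Pointwise differentiable maps satisfying the distortion inequality `‖Df‖² ≤ K * det Df`. -/
def IsQuasiregularOn (K : ℝ) (f : ℂ → ℂ) (S : Set ℂ) : Prop :=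
  ∀ z ∈ S, DifferentiableAt ℝ f z ∧ ‖fderiv ℝ f z‖ ^ 2 ≤ K * planarJacobian f z

theorem tsupport_mul_subset_left' {ψ u : ℂ → ℝ} {T : Set ℂ} (hsupp : tsupport ψ ⊆ T) :
    tsupport (fun z => ψ z * u z) ⊆ T :=
  (closure_mono (Function.support_mul_subset_left ψ u)).trans hsupp

theorem differentiable_cutoff_mul {ψ u : ℂ → ℝ} {S : Set ℂ} (hψ : Differentiable ℝ ψ)
    (hsupp : tsupport ψ ⊆ S) (hu : ∀ z ∈ S, DifferentiableAt ℝ u z) :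
    Differentiable ℝ fun z => ψ z * u z := by
  intro z
  by_cases hz : z ∈ tsupport ψ
  · exact (hψ z).mul (hu z (hsupp hz))
  · have h0 : ψ =ᶠ[𝓝 z] 0 := notMem_tsupport_iff_eventuallyEq.1 hz
    have : (fun z => ψ z * u z) =ᶠ[𝓝 z] fun _ => 0 := by
      filter_upwards [h0] with w hw
      simp [hw]
    exact this.differentiableAt_iff.2 (differentiableAt_const 0)

theorem memLp_two_fderiv_cutoff_mul {ψ u : ℂ → ℝ} {S : Set ℂ}
    (hψ : ContDiff ℝ 1 ψ) (hc : HasCompactSupport ψ) (hsupp : tsupport ψ ⊆ S)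
    (hu : ∀ z ∈ S, DifferentiableAt ℝ u z)
    (hu2 : LocallyIntegrableOn (fun z => ‖fderiv ℝ u z‖ ^ 2) S) :
    MemLp (fderiv ℝ fun z => ψ z * u z) 2 := by
  have hψd : Differentiable ℝ ψ := hψ.differentiable (by simp)
  have hcK : IsCompact (tsupport ψ) := hc
  have hm : AEStronglyMeasurable (fderiv ℝ fun z => ψ z * u z) volume :=
    (measurable_fderiv ℝ _).aestronglyMeasurable
  have hus : ContinuousOn u S := fun z hz => (hu z hz).continuousAt.continuousWithinAt
  obtain ⟨A, hA⟩ := hψ.continuous.bounded_above_of_compact_support hc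
  obtain ⟨B, hB⟩ := (hψ.continuous_fderiv (by simp)).bounded_above_of_compact_support
    (hc.fderiv (𝕜 := ℝ))
  obtain ⟨D, hD⟩ := hcK.exists_bound_of_continuousOn (hus.mono hsupp)
  have hA0 : 0 ≤ A := (norm_nonneg _).trans (hA 0)
  have hB0 : 0 ≤ B := (norm_nonneg _).trans (hB 0)
  have hbound : ∀ z ∈ tsupport ψ, ‖fderiv ℝ (fun z => ψ z * u z) z‖ ≤
      A * ‖fderiv ℝ u z‖ + D * B := by
    intro z hz
    have := ((hψd z).hasFDerivAt.mul (hu z (hsupp hz)).hasFDerivAt).fderiv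
    have e : fderiv ℝ (fun z => ψ z * u z) z = ψ z • fderiv ℝ u z + u z • fderiv ℝ ψ z := this
    rw [e]
    refine (norm_add_le _ _).trans (add_le_add ?_ ?_)
    · rw [norm_smul]
      exact mul_le_mul_of_nonneg_right (hA z) (norm_nonneg _)
    · rw [norm_smul]
      exact mul_le_mul (hD z hz) (hB z) (norm_nonneg _) ((norm_nonneg _).trans (hD z hz))
  have hzero : ∀ z ∉ tsupport ψ, fderiv ℝ (fun z => ψ z * u z) z = 0 := by
    intro z hz
    have : z ∉ tsupport (fderiv ℝ fun z => ψ z * u z) := fun h =>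
      hz (tsupport_mul_subset_left' subset_rfl (tsupport_fderiv_subset ℝ h))
    exact image_eq_zero_of_notMem_tsupport this
  have hgint : IntegrableOn (fun z => 2 * A ^ 2 * ‖fderiv ℝ u z‖ ^ 2 + 2 * (D * B) ^ 2)
      (tsupport ψ) :=
    ((hu2.integrableOn_compact_subset hsupp hcK).const_mul _).add
      (integrableOn_const hcK.measure_lt_top.ne)
  rw [memLp_two_iff_integrable_sq_norm hm]
  have h1 : IntegrableOn (fun z => ‖fderiv ℝ (fun z => ψ z * u z) z‖ ^ 2) (tsupport ψ) := by
    refine Integrable.mono' hgint (hm.norm.pow 2).restrict ?_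
    filter_upwards [ae_restrict_mem (isClosed_tsupport ψ).measurableSet] with z hz
    have h2 := hbound z hz
    have h3 := norm_nonneg (fderiv ℝ (fun z => ψ z * u z) z)
    rw [Real.norm_of_nonneg (by positivity)]
    nlinarith [sq_nonneg (A * ‖fderiv ℝ u z‖ - D * B), pow_le_pow_left₀ h3 h2 2]
  refine (integrableOn_iff_integrable_of_support_subset ?_).1 h1
  intro z hz
  by_contra h
  simp [hzero z h] at hz

/-- `∫ dh ∧ dv = 0` when `h` is compactly supported in the disc where `v` is defined. -/
theorem integral_fderiv_wedge_eq_zero {h v : ℂ → ℝ} {y : ℂ} {r R : ℝ} (hr : 0 < r) (hrR : r < R)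
    (hh : Differentiable ℝ h) (hsupp : tsupport h ⊆ closedBall y r) (hh2 : MemLp (fderiv ℝ h) 2)
    (hv : ∀ z ∈ ball y R, DifferentiableAt ℝ v z)
    (hv2 : LocallyIntegrableOn (fun z => ‖fderiv ℝ v z‖ ^ 2) (ball y R)) :
    Integrable (fun z => fderiv ℝ h z 1 * fderiv ℝ v z I - fderiv ℝ h z I * fderiv ℝ v z 1) ∧
    ∫ z, (fderiv ℝ h z 1 * fderiv ℝ v z I - fderiv ℝ h z I * fderiv ℝ v z 1) = 0 := by
  let χ : ContDiffBump y := ⟨(2 * r + R) / 3, (r + 2 * R) / 3, by linarith, by linarith⟩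
  have hχs : tsupport χ ⊆ ball y R := by
    rw [χ.tsupport_eq]
    exact closedBall_subset_ball (by simp only [χ]; linarith)
  have hw : Differentiable ℝ fun z => χ z * v z :=
    differentiable_cutoff_mul (χ.contDiff.differentiable (n := 1) (by simp)) hχs hv
  have hw2 := memLp_two_fderiv_cutoff_mul χ.contDiff χ.hasCompactSupport hχs hv hv2
  have hch : HasCompactSupport h :=
    (isCompact_closedBall y r).of_isClosed_subset (isClosed_tsupport h) hsupp
  have hcw : HasCompactSupport fun z => χ z * v z := χ.hasCompactSupport.mul_right
  have happ : ∀ {u : ℂ → ℝ}, MemLp (fderiv ℝ u) 2 → ∀ c : ℂ,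
      MemLp (fun z => fderiv ℝ u z c) 2 := fun hu c =>
    (ContinuousLinearMap.apply ℝ ℝ c : (ℂ →L[ℝ] ℝ) →L[ℝ] ℝ).comp_memLp' hu
  have e : (fun z => fderiv ℝ h z 1 * fderiv ℝ v z I - fderiv ℝ h z I * fderiv ℝ v z 1) =
      fun z => fderiv ℝ h z 1 * fderiv ℝ (fun z => χ z * v z) z I -
        fderiv ℝ h z I * fderiv ℝ (fun z => χ z * v z) z 1 := by
    funext z
    by_cases hz : z ∈ tsupport h
    · have hev : (fun z => χ z * v z) =ᶠ[𝓝 z] v := by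
        have : ball y χ.rIn ∈ 𝓝 z := by
          refine isOpen_ball.mem_nhds (closedBall_subset_ball ?_ (hsupp hz))
          simp only [χ]; linarith
        filter_upwards [this] with w hw
        rw [χ.one_of_mem_closedBall (ball_subset_closedBall hw), one_mul]
      rw [hev.fderiv_eq]
    · have : fderiv ℝ h z = 0 :=
        image_eq_zero_of_notMem_tsupport fun h' => hz (tsupport_fderiv_subset ℝ h')
      simp [this]
  have i1 : Integrable fun z => fderiv ℝ h z 1 * fderiv ℝ (fun z => χ z * v z) z I :=
    (happ hh2 1).integrable_mul (happ hw2 I)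
  have i2 : Integrable fun z => fderiv ℝ h z I * fderiv ℝ (fun z => χ z * v z) z 1 :=
    (happ hh2 I).integrable_mul (happ hw2 1)
  rw [e]
  refine ⟨i1.sub i2, ?_⟩
  rw [integral_sub i1 i2, sub_eq_zero]
  exact integral_fderiv_mul_fderiv_comm hh hw hch hcw hh2 hw2 1 I

theorem fderiv_re_apply {f : ℂ → ℂ} {z : ℂ} (hf : DifferentiableAt ℝ f z) :
    HasFDerivAt (fun z => (f z).re) (reCLM.comp (fderiv ℝ f z)) z :=
  reCLM.hasFDerivAt.comp z hf.hasFDerivAt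

theorem fderiv_im_apply {f : ℂ → ℂ} {z : ℂ} (hf : DifferentiableAt ℝ f z) :
    HasFDerivAt (fun z => (f z).im) (imCLM.comp (fderiv ℝ f z)) z :=
  imCLM.hasFDerivAt.comp z hf.hasFDerivAt

theorem norm_reCLM_comp_le (L : ℂ →L[ℝ] ℂ) : ‖reCLM.comp L‖ ≤ ‖L‖ := by
  simpa using reCLM.opNorm_comp_le L

theorem norm_imCLM_comp_le (L : ℂ →L[ℝ] ℂ) : ‖imCLM.comp L‖ ≤ ‖L‖ := by
  simpa using imCLM.opNorm_comp_le L

theorem locallyIntegrableOn_sq_norm_fderiv_of_le {f : ℂ → ℂ} {u : ℂ → ℝ} {S : Set ℂ}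
    (hS : IsOpen S) (hf : LocallyIntegrableOn (fun z => ‖fderiv ℝ f z‖ ^ 2) S)
    (hu : ∀ z ∈ S, ‖fderiv ℝ u z‖ ≤ ‖fderiv ℝ f z‖) :
    LocallyIntegrableOn (fun z => ‖fderiv ℝ u z‖ ^ 2) S := by
  rw [locallyIntegrableOn_iff hS.isLocallyClosed] at hf ⊢
  intro k hk hkc
  refine (hf k hk hkc).mono' ((measurable_fderiv ℝ u).norm.pow_const 2).aestronglyMeasurable ?_
  filter_upwards [ae_restrict_mem hkc.measurableSet] with z hz
  rw [Real.norm_of_nonneg (by positivity)]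
  exact pow_le_pow_left₀ (norm_nonneg _) (hu z (hk hz)) 2

/-- **Caccioppoli inequality**: the Dirichlet energy of a quasiregular map on a disc is controlled
on the half disc by the supremum of the imaginary part alone. -/
theorem exists_caccioppoli : ∃ A : ℝ, 0 < A ∧ ∀ (K M r R : ℝ) (y : ℂ) (f : ℂ → ℂ), 0 < K → 0 < r →
    r < R → IsQuasiregularOn K f (ball y R) →
    LocallyIntegrableOn (fun z => ‖fderiv ℝ f z‖ ^ 2) (ball y R) →
    (∀ z ∈ ball y R, |(f z).im| ≤ M) →
    ∫ z in closedBall y (r / 2), ‖fderiv ℝ f z‖ ^ 2 ≤ A * K ^ 2 * M ^ 2 := by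
  let φ : ContDiffBump (0 : ℂ) := ⟨1 / 2, 1, by norm_num, by norm_num⟩
  have hφ1 : ContDiff ℝ 1 φ := φ.contDiff
  obtain ⟨B, hB⟩ := (hφ1.continuous_fderiv (by simp)).bounded_above_of_compact_support
    (φ.hasCompactSupport.fderiv (𝕜 := ℝ))
  have hB0 : 0 ≤ B := (norm_nonneg _).trans (hB 0)
  refine ⟨16 * (B ^ 2 * Real.pi) + 1, by positivity, ?_⟩
  intro K M r R y f hK hr hrR hf hfi hM
  let ψ : ℂ → ℝ := fun z => φ (r⁻¹ • (z - y))
  have hψ1 : ContDiff ℝ 1 ψ := hφ1.comp (by fun_prop)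
  have hψd : Differentiable ℝ ψ := hψ1.differentiable (by simp)
  have hψD : ∀ z, ‖fderiv ℝ ψ z‖ ≤ B / r := by
    intro z
    have h0 : HasFDerivAt (fun z : ℂ => r⁻¹ • (z - y)) (r⁻¹ • ContinuousLinearMap.id ℝ ℂ) z :=
      ((hasFDerivAt_id z).sub_const y).const_smul r⁻¹
    have h1 : HasFDerivAt ψ ((fderiv ℝ φ (r⁻¹ • (z - y))).comp
        (r⁻¹ • ContinuousLinearMap.id ℝ ℂ)) z :=
      HasFDerivAt.comp (g := φ) z
        (hφ1.differentiable (by simp) (r⁻¹ • (z - y))).hasFDerivAt h0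
    rw [h1.fderiv]
    refine (ContinuousLinearMap.opNorm_comp_le _ _).trans ?_
    rw [norm_smul, Real.norm_of_nonneg (by positivity), div_eq_mul_inv]
    refine mul_le_mul (hB _) ?_ (by positivity) hB0
    have := ContinuousLinearMap.norm_id_le (𝕜 := ℝ) (E := ℂ)
    nlinarith [inv_pos.2 hr]
  have hnorm : ∀ z, ‖r⁻¹ • (z - y)‖ = dist z y / r := by
    intro z
    rw [norm_smul, Real.norm_of_nonneg (by positivity), dist_eq_norm]
    field_simp
  have hψ0 : ∀ z, 0 ≤ ψ z := fun z => φ.nonneg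
  have hψle : ∀ z, ψ z ≤ 1 := fun z => φ.le_one
  have hψone : ∀ z ∈ closedBall y (r / 2), ψ z = 1 := by
    intro z hz
    refine φ.one_of_mem_closedBall ?_
    rw [mem_closedBall_zero_iff, hnorm, div_le_iff₀ hr]
    rw [mem_closedBall] at hz
    simp only [φ]; linarith
  have hψsupp : Function.support ψ ⊆ closedBall y r := by
    intro z hz
    by_contra h
    refine hz (φ.zero_of_le_dist ?_)
    rw [dist_zero_right, hnorm, le_div_iff₀ hr]
    rw [mem_closedBall, not_le] at h
    simp only [φ]; linarith
  have hψts : tsupport ψ ⊆ closedBall y r := closure_minimal hψsupp isClosed_closedBall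
  have hsub : closedBall y r ⊆ ball y R := closedBall_subset_ball hrR
  have hψc : HasCompactSupport ψ :=
    (isCompact_closedBall y r).of_isClosed_subset (isClosed_tsupport ψ) hψts
  have hψD0 : ∀ z ∉ closedBall y r, fderiv ℝ ψ z = 0 := fun z hz =>
    image_eq_zero_of_notMem_tsupport fun h' => hz (hψts (tsupport_fderiv_subset ℝ h'))
  let ψ2 : ℂ → ℝ := fun z => ψ z ^ 2
  have hψ2 : ContDiff ℝ 1 ψ2 := hψ1.pow 2
  have hψ2ts : tsupport ψ2 ⊆ closedBall y r := by
    refine closure_minimal ?_ isClosed_closedBall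
    intro z hz
    refine hψsupp fun h => hz ?_
    simp [ψ2, h]
  have hψ2c : HasCompactSupport ψ2 :=
    (isCompact_closedBall y r).of_isClosed_subset (isClosed_tsupport ψ2) hψ2ts
  have hV : ∀ z ∈ ball y R, DifferentiableAt ℝ (fun z => (f z).im) z := fun z hz =>
    (fderiv_im_apply (hf z hz).1).differentiableAt
  have hU : ∀ z ∈ ball y R, DifferentiableAt ℝ (fun z => (f z).re) z := fun z hz =>
    (fderiv_re_apply (hf z hz).1).differentiableAt
  have hVi := locallyIntegrableOn_sq_norm_fderiv_of_le (u := fun z => (f z).im) isOpen_ball hfi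
    fun z hz => by rw [(fderiv_im_apply (hf z hz).1).fderiv]; exact norm_imCLM_comp_le _
  have hUi := locallyIntegrableOn_sq_norm_fderiv_of_le (u := fun z => (f z).re) isOpen_ball hfi
    fun z hz => by rw [(fderiv_re_apply (hf z hz).1).fderiv]; exact norm_reCLM_comp_le _
  let h : ℂ → ℝ := fun z => ψ2 z * (f z).im
  have hhd : Differentiable ℝ h :=
    differentiable_cutoff_mul (hψ2.differentiable (by simp)) (hψ2ts.trans hsub) hV
  have hh2 : MemLp (fderiv ℝ h) 2 :=
    memLp_two_fderiv_cutoff_mul hψ2 hψ2c (hψ2ts.trans hsub) hV hVi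
  obtain ⟨hGi, hG0⟩ := integral_fderiv_wedge_eq_zero hr hrR hhd
    (tsupport_mul_subset_left' hψ2ts) hh2 hU hUi
  set G : ℂ → ℝ := fun z => fderiv ℝ h z 1 * fderiv ℝ (fun z => (f z).re) z I -
    fderiv ℝ h z I * fderiv ℝ (fun z => (f z).re) z 1 with hG
  have hpt : ∀ z ∈ ball y R, ψ z ^ 2 * ‖fderiv ℝ f z‖ ^ 2 ≤
      2 * K * (-G z) + 16 * K ^ 2 * M ^ 2 * ‖fderiv ℝ ψ z‖ ^ 2 := by
    intro z hz
    have hDh : fderiv ℝ h z = (ψ z ^ 2) • (imCLM.comp (fderiv ℝ f z)) +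
        (f z).im • ((2 * ψ z) • fderiv ℝ ψ z) := by
      have e2 : HasFDerivAt ψ2 ((2 * ψ z) • fderiv ℝ ψ z) z := by
        simpa using (hψd z).hasFDerivAt.pow 2
      exact (e2.mul (fderiv_im_apply (hf z hz).1)).fderiv
    have hGz : G z = 2 * ψ z * (f z).im * (fderiv ℝ ψ z 1 * (fderiv ℝ f z I).re -
        fderiv ℝ ψ z I * (fderiv ℝ f z 1).re) - ψ z ^ 2 * planarJacobian f z := by
      simp only [hG, hDh, (fderiv_re_apply (hf z hz).1).fderiv, planarJacobian]
      simp
      ring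
    have hqr := (hf z hz).2
    have n1 : ∀ c : ℂ, ‖c‖ = 1 → |fderiv ℝ ψ z c| ≤ ‖fderiv ℝ ψ z‖ := fun c hc => by
      simpa [hc] using (fderiv ℝ ψ z).le_opNorm c
    have n2 : ∀ c : ℂ, ‖c‖ = 1 → |(fderiv ℝ f z c).re| ≤ ‖fderiv ℝ f z‖ := fun c hc =>
      (abs_re_le_norm _).trans (by simpa [hc] using (fderiv ℝ f z).le_opNorm c)
    set P := ‖fderiv ℝ ψ z‖ with hP
    set Q := ‖fderiv ℝ f z‖ with hQ
    have hP0 : 0 ≤ P := norm_nonneg _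
    have hQ0 : 0 ≤ Q := norm_nonneg _
    have hW : |fderiv ℝ ψ z 1 * (fderiv ℝ f z I).re - fderiv ℝ ψ z I * (fderiv ℝ f z 1).re| ≤
        2 * (P * Q) := by
      refine (abs_sub _ _).trans ?_
      rw [abs_mul, abs_mul]
      have a1 := mul_le_mul (n1 1 (by simp)) (n2 I (by simp)) (abs_nonneg _) hP0
      have a2 := mul_le_mul (n1 I (by simp)) (n2 1 (by simp)) (abs_nonneg _) hP0
      linarith
    have hM0 : 0 ≤ M := (abs_nonneg _).trans (hM z hz)
    have hX : 2 * ψ z * (f z).im * (fderiv ℝ ψ z 1 * (fderiv ℝ f z I).re -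
        fderiv ℝ ψ z I * (fderiv ℝ f z 1).re) ≤ 4 * (ψ z * Q) * (M * P) := by
      refine (le_abs_self _).trans ?_
      rw [abs_mul, abs_mul, abs_of_nonneg (by have := hψ0 z; positivity : 0 ≤ 2 * ψ z)]
      calc 2 * ψ z * |(f z).im| * _ ≤ 2 * ψ z * M * (2 * (P * Q)) := by
            have := hψ0 z
            have := hM z hz
            gcongr
        _ = _ := by ring
    have hy : 2 * K * (4 * (ψ z * Q) * (M * P)) ≤
        (ψ z * Q) ^ 2 + 16 * K ^ 2 * (M * P) ^ 2 := by
      nlinarith [sq_nonneg (ψ z * Q - 4 * K * (M * P))]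
    have hJ : ψ z ^ 2 * Q ^ 2 ≤ K * (ψ z ^ 2 * planarJacobian f z) := by
      nlinarith [mul_le_mul_of_nonneg_left hqr (sq_nonneg (ψ z))]
    have hX' := mul_le_mul_of_nonneg_left hX (by positivity : 0 ≤ 2 * K)
    rw [hGz]
    nlinarith
  have hpt' : ∀ z, (closedBall y (r / 2)).indicator (fun z => ‖fderiv ℝ f z‖ ^ 2) z ≤
      2 * K * (-G z) + (closedBall y r).indicator
        (fun _ => 16 * K ^ 2 * M ^ 2 * (B / r) ^ 2) z := by
    intro z
    by_cases hz : z ∈ closedBall y r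
    · have h1 := hpt z (hsub hz)
      have h2 : 16 * K ^ 2 * M ^ 2 * ‖fderiv ℝ ψ z‖ ^ 2 ≤ 16 * K ^ 2 * M ^ 2 * (B / r) ^ 2 := by
        have := hψD z
        gcongr
      rw [indicator_of_mem hz]
      refine le_trans ?_ (h1.trans (by linarith))
      by_cases hz2 : z ∈ closedBall y (r / 2)
      · rw [indicator_of_mem hz2, hψone z hz2]; simp
      · rw [indicator_of_notMem hz2]; positivity
    · have hz2 : z ∉ closedBall y (r / 2) := fun h' =>
        hz (closedBall_subset_closedBall (by linarith) h')
      have hh0 : fderiv ℝ h z = 0 := image_eq_zero_of_notMem_tsupport fun h' =>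
        hz (tsupport_mul_subset_left' hψ2ts (tsupport_fderiv_subset ℝ h'))
      rw [indicator_of_notMem hz, indicator_of_notMem hz2]
      simp [hG, hh0]
  have i1 : Integrable ((closedBall y (r / 2)).indicator (fun z => ‖fderiv ℝ f z‖ ^ 2)) := by
    rw [integrable_indicator_iff isClosed_closedBall.measurableSet]
    exact hfi.integrableOn_compact_subset ((closedBall_subset_closedBall (by linarith)).trans hsub)
      (isCompact_closedBall _ _)
  have i2 : Integrable fun z => 2 * K * (-G z) := hGi.neg.const_mul _
  have i3 : Integrable ((closedBall y r).indicator
      (fun _ : ℂ => 16 * K ^ 2 * M ^ 2 * (B / r) ^ 2)) := by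
    rw [integrable_indicator_iff isClosed_closedBall.measurableSet]
    exact integrableOn_const (isCompact_closedBall _ _).measure_lt_top.ne
  have hle := integral_mono i1 (i2.add i3) hpt'
  rw [integral_indicator isClosed_closedBall.measurableSet] at hle
  refine hle.trans ?_
  simp only [Pi.add_apply]
  rw [integral_add i2 i3, integral_const_mul, integral_neg, hG0,
    integral_indicator isClosed_closedBall.measurableSet, setIntegral_const]
  have hvol : volume.real (closedBall y r) = r ^ 2 * Real.pi := by
    rw [Measure.real, Complex.volume_closedBall]
    simp [hr.le]
  rw [hvol, smul_eq_mul]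
  have : r ^ 2 * Real.pi * (16 * K ^ 2 * M ^ 2 * (B / r) ^ 2) =
      16 * (B ^ 2 * Real.pi) * K ^ 2 * M ^ 2 := by field_simp
  rw [this]
  nlinarith [sq_nonneg (K * M)]

theorem hasDerivAt_max_zero_sq (t : ℝ) : HasDerivAt (fun t : ℝ => max t 0 ^ 2) (2 * max t 0) t := by
  rcases lt_trichotomy t 0 with h | h | h
  · have : (fun t : ℝ => max t 0 ^ 2) =ᶠ[𝓝 t] fun _ => 0 := by
      filter_upwards [gt_mem_nhds h] with s hs
      simp [max_eq_right hs.le]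
    rw [max_eq_right h.le, mul_zero]
    exact (hasDerivAt_const t 0).congr_of_eventuallyEq this
  · subst h
    rw [max_self, mul_zero, hasDerivAt_iff_hasFDerivAt]
    have : (fun t : ℝ => max t 0 ^ 2) =O[𝓝 0] fun t => ‖t - 0‖ ^ 2 := by
      refine IsBigO.of_bound 1 (Eventually.of_forall fun s => ?_)
      rw [one_mul, sub_zero, norm_pow, norm_pow, norm_norm]
      refine pow_le_pow_left₀ (norm_nonneg _) ?_ 2
      rw [Real.norm_eq_abs, Real.norm_eq_abs, abs_of_nonneg (le_max_right _ _)]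
      exact max_le (le_abs_self s) (abs_nonneg s)
    have h2 := this.hasFDerivAt (𝕜 := ℝ) (by norm_num)
    simpa using h2
  · have : (fun t : ℝ => max t 0 ^ 2) =ᶠ[𝓝 t] fun t => t ^ 2 := by
      filter_upwards [lt_mem_nhds h] with s hs
      simp [max_eq_left (le_of_lt hs)]
    rw [max_eq_left h.le]
    have h2 := (hasDerivAt_pow 2 t).congr_of_eventuallyEq this
    simpa using h2

theorem eq_zero_of_fderiv_ae_eq_zero {h : ℂ → ℝ} (hd : Differentiable ℝ h)
    (hc : HasCompactSupport h) (h0 : ∀ z, 0 ≤ h z) (hD : ∀ᵐ z, fderiv ℝ h z = 0) : h = 0 := by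
  have hi : Integrable h := hd.continuous.integrable_of_hasCompactSupport hc
  have hDz : (fun z : ℂ => z.re * fderiv ℝ h z 1) =ᵐ[volume] fun _ => 0 := by
    filter_upwards [hD] with z hz
    simp [hz]
  have hre : ∀ z : ℂ, fderiv ℝ (fun z : ℂ => z.re) z = reCLM := fun z => reCLM.hasFDerivAt.fderiv
  have key := integral_mul_fderiv_eq_neg_fderiv_mul_of_integrable (μ := (volume : Measure ℂ))
    (f := fun z : ℂ => z.re) (g := h) (v := (1 : ℂ)) (by simpa [hre] using hi)
    ((integrable_zero _ _ _).congr hDz.symm)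
    ((continuous_re.mul hd.continuous).integrable_of_hasCompactSupport hc.mul_left)
    (fun z _ => reCLM.differentiableAt) (fun z _ => hd z)
  rw [integral_congr_ae hDz] at key
  simp only [hre, integral_zero, reCLM_apply, one_re, one_mul] at key
  have h1 : ∫ z, h z = 0 := by linarith
  rw [integral_eq_zero_iff_of_nonneg h0 hi] at h1
  exact (Continuous.ae_eq_iff_eq volume hd.continuous continuous_zero).1 h1

/-- **Maximum principle** for the real part of a quasiregular map of finite energy. -/
theorem IsQuasiregularOn.re_le_of_sphere_re_le {K M r R : ℝ} {y : ℂ} {f : ℂ → ℂ} (hK : 0 < K)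
    (hr : 0 < r) (hrR : r < R) (hf : IsQuasiregularOn K f (ball y R))
    (hfi : LocallyIntegrableOn (fun z => ‖fderiv ℝ f z‖ ^ 2) (ball y R))
    (hM : ∀ z ∈ sphere y r, (f z).re ≤ M) : ∀ z ∈ closedBall y r, (f z).re ≤ M := by
  have hsub : closedBall y r ⊆ ball y R := closedBall_subset_ball hrR
  let U : ℂ → ℝ := fun z => (f z).re
  have hUd : ∀ z ∈ ball y R, HasFDerivAt U (reCLM.comp (fderiv ℝ f z)) z := fun z hz =>
    fderiv_re_apply (hf z hz).1
  let h : ℂ → ℝ := (closedBall y r).indicator fun z => max (U z - M) 0 ^ 2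
  let D : ℂ → ℂ →L[ℝ] ℝ := (closedBall y r).indicator
    fun z => (2 * max (U z - M) 0) • reCLM.comp (fderiv ℝ f z)
  have hhD : ∀ z, HasFDerivAt h (D z) z := by
    intro z
    rcases lt_trichotomy (dist z y) r with hz | hz | hz
    · have e : h =ᶠ[𝓝 z] fun z => max (U z - M) 0 ^ 2 := by
        filter_upwards [isOpen_ball.mem_nhds (mem_ball.2 hz)] with w hw
        exact indicator_of_mem (ball_subset_closedBall hw) _
      have hzb : z ∈ closedBall y r := hz.le
      simp only [D, indicator_of_mem hzb]
      refine HasFDerivAt.congr_of_eventuallyEq ?_ e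
      exact (hasDerivAt_max_zero_sq (U z - M)).comp_hasFDerivAt z
        ((hUd z (hsub hzb)).sub_const M)
    · have hzb : z ∈ closedBall y r := hz.le
      have hUz : U z ≤ M := hM z hz
      simp only [D, indicator_of_mem hzb, max_eq_right (sub_nonpos.2 hUz), mul_zero, zero_smul]
      have hO : h =O[𝓝 z] fun w => ‖w - z‖ ^ 2 := by
        have h1 : (fun w => U w - U z) =O[𝓝 z] fun w => w - z := (hUd z (hsub hzb)).isBigO_sub
        refine IsBigO.trans (IsBigO.of_bound 1 (Eventually.of_forall fun w => ?_))
          (h1.norm_norm.pow 2)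
        rw [one_mul, norm_pow, norm_norm]
        by_cases hw : w ∈ closedBall y r
        · simp only [h, indicator_of_mem hw, norm_pow]
          refine pow_le_pow_left₀ (norm_nonneg _) ?_ 2
          rw [Real.norm_eq_abs, Real.norm_eq_abs, abs_of_nonneg (le_max_right _ _)]
          exact max_le ((by linarith : U w - M ≤ U w - U z).trans (le_abs_self _)) (abs_nonneg _)
        · simp only [h, indicator_of_notMem hw, norm_zero]
          positivity
      exact hO.hasFDerivAt (by norm_num)
    · have hz' : z ∉ closedBall y r := fun h' => absurd (mem_closedBall.1 h') (not_le.2 hz)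
      have e : h =ᶠ[𝓝 z] fun _ => 0 := by
        filter_upwards [isClosed_closedBall.isOpen_compl.mem_nhds hz'] with w hw
        exact indicator_of_notMem hw _
      simp only [D, indicator_of_notMem hz']
      exact (hasFDerivAt_const (0 : ℝ) z).congr_of_eventuallyEq e
  have hd : Differentiable ℝ h := fun z => (hhD z).differentiableAt
  have hts : tsupport h ⊆ closedBall y r :=
    closure_minimal support_indicator_subset isClosed_closedBall
  have hcs : HasCompactSupport h :=
    (isCompact_closedBall y r).of_isClosed_subset (isClosed_tsupport h) hts
  have hUc : ContinuousOn (fun z => 2 * max (U z - M) 0) (closedBall y r) := by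
    have : ContinuousOn U (closedBall y r) := fun z hz =>
      (hUd z (hsub hz)).continuousAt.continuousWithinAt
    exact ((this.sub continuousOn_const).sup continuousOn_const).const_smul (2 : ℝ)
  obtain ⟨B, hB⟩ := (isCompact_closedBall y r).exists_bound_of_continuousOn hUc
  have hDle : ∀ z ∈ closedBall y r, ‖D z‖ ≤ 2 * max (U z - M) 0 * ‖fderiv ℝ f z‖ := by
    intro z hz
    simp only [D, indicator_of_mem hz]
    rw [norm_smul, Real.norm_of_nonneg (by positivity)]
    exact mul_le_mul_of_nonneg_left (norm_reCLM_comp_le _) (by positivity)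
  have hm : AEStronglyMeasurable (fderiv ℝ h) volume :=
    (measurable_fderiv ℝ _).aestronglyMeasurable
  have hL2 : MemLp (fderiv ℝ h) 2 := by
    rw [memLp_two_iff_integrable_sq_norm hm]
    have hi : Integrable ((closedBall y r).indicator fun z => B ^ 2 * ‖fderiv ℝ f z‖ ^ 2) := by
      rw [integrable_indicator_iff isClosed_closedBall.measurableSet]
      exact (hfi.integrableOn_compact_subset hsub (isCompact_closedBall _ _)).const_mul _
    refine hi.mono' (hm.norm.pow 2) (Eventually.of_forall fun z => ?_)
    rw [Real.norm_of_nonneg (by positivity), (hhD z).fderiv]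
    by_cases hz : z ∈ closedBall y r
    · rw [indicator_of_mem hz, ← mul_pow]
      refine pow_le_pow_left₀ (norm_nonneg _) ((hDle z hz).trans ?_) 2
      exact mul_le_mul_of_nonneg_right ((le_abs_self _).trans (hB z hz)) (norm_nonneg _)
    · simp [D, indicator_of_notMem hz]
  have hV : ∀ z ∈ ball y R, DifferentiableAt ℝ (fun z => (f z).im) z := fun z hz =>
    (fderiv_im_apply (hf z hz).1).differentiableAt
  have hVi := locallyIntegrableOn_sq_norm_fderiv_of_le (u := fun z => (f z).im) isOpen_ball hfi
    fun z hz => by rw [(fderiv_im_apply (hf z hz).1).fderiv]; exact norm_imCLM_comp_le _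
  obtain ⟨hGi, hG0⟩ := integral_fderiv_wedge_eq_zero hr hrR hd hts hL2 hV hVi
  have hG : (fun z => fderiv ℝ h z 1 * fderiv ℝ (fun z => (f z).im) z I -
      fderiv ℝ h z I * fderiv ℝ (fun z => (f z).im) z 1) = (closedBall y r).indicator
        fun z => 2 * max (U z - M) 0 * planarJacobian f z := by
    funext z
    by_cases hz : z ∈ closedBall y r
    · simp only [(hhD z).fderiv, (fderiv_im_apply (hf z (hsub hz)).1).fderiv, D,
        indicator_of_mem hz, planarJacobian]
      simp
      ring
    · simp [(hhD z).fderiv, D, indicator_of_notMem hz]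
  have hJ0 : ∀ z ∈ closedBall y r, 0 ≤ planarJacobian f z := fun z hz => by
    have := (hf z (hsub hz)).2
    by_contra! hneg
    nlinarith [sq_nonneg ‖fderiv ℝ f z‖]
  rw [hG] at hGi hG0
  rw [integral_eq_zero_iff_of_nonneg ?_ hGi] at hG0
  swap
  · refine indicator_nonneg fun z hz => ?_
    have := hJ0 z hz
    positivity
  have hh0 : h = 0 := by
    refine eq_zero_of_fderiv_ae_eq_zero hd hcs
      (fun z => indicator_nonneg (fun w _ => sq_nonneg _) z) ?_
    filter_upwards [hG0] with z hz
    rw [(hhD z).fderiv]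
    by_cases hzb : z ∈ closedBall y r
    · rw [indicator_of_mem hzb] at hz
      rw [← norm_le_zero_iff]
      refine (hDle z hzb).trans ?_
      rcases mul_eq_zero.1 hz with h1 | h1
      · rw [h1, zero_mul]
      · have h2 := (hf z (hsub hzb)).2
        rw [h1, mul_zero] at h2
        have h3 : ‖fderiv ℝ f z‖ = 0 := by
          have := norm_nonneg (fderiv ℝ f z)
          nlinarith
        rw [h3, mul_zero]
    · exact indicator_of_notMem hzb _
  intro z hz
  have h1 : h z = 0 := congrFun hh0 z
  simp only [h, indicator_of_mem hz] at h1
  have h2 : max (U z - M) 0 = 0 := by simpa using h1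
  have := le_max_left (U z - M) 0
  change U z ≤ M
  linarith

theorem lintegral_annulus_le_lintegral {F : ℂ → ENNReal} (hF : Measurable F) {ρ R : ℝ}
    (hρ : 0 < ρ) :
    ∫⁻ r in Ioo ρ R, ∫⁻ θ in Ioo (-Real.pi) Real.pi,
      ENNReal.ofReal r * F (r * exp (θ * I)) ≤ ∫⁻ z, F z := by
  rw [← Complex.lintegral_comp_polarCoord_symm F, polarCoord_target,
    Measure.volume_eq_prod, ← Measure.prod_restrict, lintegral_prod]
  · simp only [smul_eq_mul, Complex.polarCoord_symm_apply, exp_mul_I, ofReal_cos,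
      ofReal_sin]
    exact lintegral_mono_set fun r (hr : r ∈ Ioo ρ R) => hρ.trans hr.1
  · refine Measurable.aemeasurable ?_
    simp only [smul_eq_mul, Complex.polarCoord_symm_apply]
    refine (measurable_fst.ennreal_ofReal).mul (hF.comp ?_)
    fun_prop

/-- **Courant–Lebesgue**: some circle in the annulus carries little energy. -/
theorem exists_circle_energy_le {g : ℂ → ℝ} (hg : Measurable g) (hg0 : ∀ z, 0 ≤ g z)
    {ρ R E : ℝ} (hρ : 0 < ρ) (hρR : ρ < R) (hE : 0 < E)
    (hgi : IntegrableOn g (closedBall 0 R)) (hgE : ∫ z in closedBall 0 R, g z ≤ E) :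
    ∃ r ∈ Ioo ρ R, ∫⁻ θ in Ioo (-Real.pi) Real.pi, ENNReal.ofReal (r ^ 2 * g (r * exp (θ * I))) ≤
      ENNReal.ofReal (2 * E / Real.log (R / ρ)) := by
  by_contra! hcon
  have hlog : 0 < Real.log (R / ρ) := Real.log_pos ((one_lt_div hρ).2 hρR)
  set c := 2 * E / Real.log (R / ρ) with hc
  have hc0 : 0 < c := by positivity
  have hF : Measurable ((closedBall (0 : ℂ) R).indicator fun z => ENNReal.ofReal (g z)) :=
    hg.ennreal_ofReal.indicator isClosed_closedBall.measurableSet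
  have h1 := lintegral_annulus_le_lintegral hF hρ (R := R)
  rw [lintegral_indicator isClosed_closedBall.measurableSet,
    ← ofReal_integral_eq_lintegral_ofReal hgi (Eventually.of_forall hg0)] at h1
  have h2 : ∫⁻ r in Ioo ρ R, ENNReal.ofReal (c * r⁻¹) ≤ ∫⁻ r in Ioo ρ R,
      ∫⁻ θ in Ioo (-Real.pi) Real.pi, ENNReal.ofReal r *
        (closedBall (0 : ℂ) R).indicator (fun z => ENNReal.ofReal (g z)) (r * exp (θ * I)) := by
    refine setLIntegral_mono' measurableSet_Ioo fun r hr => ?_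
    have hr0 : 0 < r := hρ.trans hr.1
    have hmem : ∀ θ : ℝ, (r * exp (θ * I) : ℂ) ∈ closedBall (0 : ℂ) R := fun θ => by
      rw [mem_closedBall_zero_iff, norm_mul, norm_exp_ofReal_mul_I, norm_real, mul_one,
        Real.norm_of_nonneg hr0.le]
      exact hr.2.le
    simp only [indicator_of_mem (hmem _)]
    calc ENNReal.ofReal (c * r⁻¹) = ENNReal.ofReal r⁻¹ * ENNReal.ofReal c := by
          rw [mul_comm, ENNReal.ofReal_mul (by positivity)]
      _ ≤ ENNReal.ofReal r⁻¹ * ∫⁻ θ in Ioo (-Real.pi) Real.pi,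
            ENNReal.ofReal (r ^ 2 * g (r * exp (θ * I))) := by
          gcongr
          exact (hcon r hr).le
      _ = ∫⁻ θ in Ioo (-Real.pi) Real.pi, ENNReal.ofReal r⁻¹ *
            ENNReal.ofReal (r ^ 2 * g (r * exp (θ * I))) :=
          (lintegral_const_mul' _ _ ENNReal.ofReal_ne_top).symm
      _ = _ := by
          congr 1
          funext θ
          rw [← ENNReal.ofReal_mul (by positivity), ← ENNReal.ofReal_mul hr0.le]
          congr 1
          field_simp
  have hinteg : IntegrableOn (fun r : ℝ => c * r⁻¹) (Ioo ρ R) := by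
    refine (ContinuousOn.integrableOn_Icc ?_).mono_set Ioo_subset_Icc_self
    exact continuousOn_const.mul (continuousOn_id.inv₀ fun r hr => (hρ.trans_le hr.1).ne')
  have h3 : ∫⁻ r in Ioo ρ R, ENNReal.ofReal (c * r⁻¹) = ENNReal.ofReal (2 * E) := by
    rw [← ofReal_integral_eq_lintegral_ofReal hinteg]
    · rw [← integral_Ioc_eq_integral_Ioo, ← intervalIntegral.integral_of_le hρR.le,
        intervalIntegral.integral_const_mul, integral_inv_of_pos hρ (hρ.trans hρR), hc,
        div_mul_cancel₀ _ hlog.ne']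
    · filter_upwards [ae_restrict_mem measurableSet_Ioo] with r hr
      have : 0 < r := hρ.trans hr.1
      positivity
  have h4 := (h3.symm.trans_le h2).trans (h1.trans (ENNReal.ofReal_le_ofReal hgE))
  rw [ENNReal.ofReal_le_ofReal_iff hE.le] at h4
  linarith

/-- Oscillation on a circle from the energy on it. -/
theorem norm_sub_le_of_circle_energy_le {f : ℂ → ℂ} {r τ : ℝ} (hr : 0 < r) (hτ : 0 < τ)
    (hf : ∀ z ∈ sphere (0 : ℂ) r, DifferentiableAt ℝ f z)
    (hE : ∫⁻ θ in Ioo (-Real.pi) Real.pi,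
      ENNReal.ofReal (r ^ 2 * ‖fderiv ℝ f (r * exp (θ * I))‖ ^ 2) ≤ ENNReal.ofReal (τ ^ 2)) :
    ∀ z ∈ sphere (0 : ℂ) r, ‖f z - f (r * exp (-Real.pi * I))‖ ≤ 4 * τ := by
  let γ : ℝ → ℂ := fun θ => r * exp (θ * I)
  have hγm : ∀ θ, γ θ ∈ sphere (0 : ℂ) r := fun θ => by
    simp only [γ]
    rw [mem_sphere_zero_iff_norm, norm_mul, norm_exp_ofReal_mul_I, norm_real, mul_one,
      Real.norm_of_nonneg hr.le]
  have hγd : ∀ θ : ℝ, HasDerivAt γ (r * (exp (θ * I) * I)) θ := fun θ => by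
    have h1 : HasDerivAt (fun θ : ℝ => (θ : ℂ) * I) I θ := by
      simpa using (HasDerivAt.ofReal_comp (hasDerivAt_id θ)).mul_const I
    exact (h1.cexp).const_mul _
  let d : ℝ → ℂ := fun θ => fderiv ℝ f (γ θ) (r * (exp (θ * I) * I))
  have hd : ∀ θ, HasDerivAt (fun θ => f (γ θ)) (d θ) θ := fun θ =>
    (hf _ (hγm θ)).hasFDerivAt.comp_hasDerivAt θ (hγd θ)
  let G : ℝ → ℝ := fun θ => r ^ 2 * ‖fderiv ℝ f (γ θ)‖ ^ 2
  have hγc : Continuous γ := by simp only [γ]; fun_prop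
  have hGm : Measurable G :=
    (((measurable_fderiv ℝ f).comp hγc.measurable).norm.pow_const 2).const_mul _
  have hG0 : ∀ θ, 0 ≤ G θ := fun θ => by simp only [G]; positivity
  have hGi : IntegrableOn G (Ioo (-Real.pi) Real.pi) := by
    refine ⟨hGm.aestronglyMeasurable, ?_⟩
    rw [hasFiniteIntegral_iff_ofReal (Eventually.of_forall hG0)]
    exact hE.trans_lt ENNReal.ofReal_lt_top
  have hGE : ∫ θ in Ioo (-Real.pi) Real.pi, G θ ≤ τ ^ 2 := by
    rw [← ENNReal.ofReal_le_ofReal_iff (by positivity),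
      ofReal_integral_eq_lintegral_ofReal hGi (Eventually.of_forall hG0)]
    exact hE
  have hdn : ∀ θ, ‖d θ‖ ≤ (τ + τ⁻¹ * G θ) / 2 := fun θ => by
    have h1 : ‖d θ‖ ≤ ‖fderiv ℝ f (γ θ)‖ * r := by
      refine ((fderiv ℝ f (γ θ)).le_opNorm _).trans (le_of_eq ?_)
      rw [norm_mul, norm_mul, norm_exp_ofReal_mul_I, norm_real, norm_I, one_mul, mul_one,
        Real.norm_of_nonneg hr.le]
    refine h1.trans ?_
    have h2 : 0 ≤ τ⁻¹ * (‖fderiv ℝ f (γ θ)‖ * r - τ) ^ 2 := by positivity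
    have h3 : τ⁻¹ * (‖fderiv ℝ f (γ θ)‖ * r - τ) ^ 2 =
        τ⁻¹ * G θ - 2 * (‖fderiv ℝ f (γ θ)‖ * r) + τ := by
      simp only [G]
      field_simp
      ring
    linarith
  have hpi := Real.pi_pos
  have hdomi : IntegrableOn (fun θ => (τ + τ⁻¹ * G θ) / 2) (Ioc (-Real.pi) Real.pi) := by
    rw [integrableOn_Ioc_iff_integrableOn_Ioo]
    exact ((integrableOn_const (by simp)).add (hGi.const_mul _)).div_const 2
  have hdm : AEStronglyMeasurable d volume := by
    refine Measurable.aestronglyMeasurable ?_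
    have : d = deriv fun θ => f (γ θ) := funext fun θ => (hd θ).deriv.symm
    rw [this]
    exact measurable_deriv _
  have hdi : IntegrableOn d (Ioc (-Real.pi) Real.pi) :=
    hdomi.mono' hdm.restrict (Eventually.of_forall hdn)
  have hdom : ∫ θ in Ioc (-Real.pi) Real.pi, (τ + τ⁻¹ * G θ) / 2 ≤ 4 * τ := by
    rw [integral_Ioc_eq_integral_Ioo, integral_div, integral_add
      (integrableOn_const (C := τ) (s := Ioo (-Real.pi) Real.pi) (by simp))
      (hGi.const_mul _), integral_const_mul, setIntegral_const]
    have h1 : volume.real (Ioo (-Real.pi) Real.pi) = 2 * Real.pi := by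
      rw [Real.volume_real_Ioo_of_le (by linarith)]; ring
    have h2 : τ⁻¹ * ∫ θ in Ioo (-Real.pi) Real.pi, G θ ≤ τ := by
      calc _ ≤ τ⁻¹ * τ ^ 2 := by gcongr
        _ = τ := by field_simp
    rw [h1, smul_eq_mul]
    have := Real.pi_lt_d2
    nlinarith
  intro z hz
  rw [mem_sphere_zero_iff_norm] at hz
  have ha := arg_mem_Ioc z
  have hz' : z = γ (arg z) := by
    simp only [γ]
    rw [← hz, norm_mul_exp_arg_mul_I]
  have hp : f (r * exp (-Real.pi * I)) = f (γ (-Real.pi)) := by simp [γ]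
  have hFTC := intervalIntegral.integral_eq_sub_of_hasDerivAt (a := -Real.pi) (b := arg z)
    (fun θ _ => hd θ) ((intervalIntegrable_iff_integrableOn_Ioc_of_le ha.1.le).2
      (hdi.mono_set (Ioc_subset_Ioc_right ha.2)))
  rw [hp, hz', ← hFTC, intervalIntegral.integral_of_le ha.1.le]
  refine (norm_integral_le_integral_norm _).trans (le_trans ?_ hdom)
  refine (setIntegral_mono_set hdi.norm (Eventually.of_forall fun θ => norm_nonneg _)
    (Ioc_subset_Ioc_right ha.2).eventuallyLE).trans ?_
  exact integral_mono hdi.norm hdomi hdn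

theorem IsQuasiregularOn.of_hasFDerivAt_smul {K : ℝ} {f h : ℂ → ℂ} {S : Set ℂ}
    (hf : IsQuasiregularOn K f S) (hh : ∀ z ∈ S, ∃ a : ℂ, HasFDerivAt h (a • fderiv ℝ f z) z) :
    IsQuasiregularOn K h S := by
  intro z hz
  obtain ⟨a, ha⟩ := hh z hz
  have h2 := (hf z hz).2
  refine ⟨ha.differentiableAt, ?_⟩
  rw [planarJacobian, ha.fderiv, norm_smul, mul_pow, ← normSq_eq_norm_sq, normSq_apply]
  rw [planarJacobian] at h2
  have := mul_le_mul_of_nonneg_left h2 (normSq_nonneg a)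
  rw [normSq_apply] at this
  refine this.trans (le_of_eq ?_)
  simp
  ring

theorem IsQuasiregularOn.const_mul_sub {K : ℝ} {f : ℂ → ℂ} {S : Set ℂ}
    (hf : IsQuasiregularOn K f S) (a b : ℂ) :
    IsQuasiregularOn K (fun z => a * (f z - b)) S :=
  hf.of_hasFDerivAt_smul fun z hz => ⟨a, ((hf z hz).1.hasFDerivAt.sub_const b).const_mul a⟩

theorem IsQuasiregularOn.norm_fderiv_const_mul_sub {K : ℝ} {f : ℂ → ℂ} {S : Set ℂ}
    (hf : IsQuasiregularOn K f S) {a : ℂ} (ha : ‖a‖ = 1) (b : ℂ) {z : ℂ} (hz : z ∈ S) :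
    ‖fderiv ℝ (fun z => a * (f z - b)) z‖ = ‖fderiv ℝ f z‖ := by
  have hD : HasFDerivAt (fun z => a * (f z - b)) (a • fderiv ℝ f z) z :=
    ((hf z hz).1.hasFDerivAt.sub_const b).const_mul a
  rw [hD.fderiv, norm_smul, ha, one_mul]

theorem LocallyIntegrableOn.congr_on {u v : ℂ → ℝ} {S : Set ℂ} (hS : IsOpen S)
    (hu : LocallyIntegrableOn u S) (h : ∀ z ∈ S, v z = u z) : LocallyIntegrableOn v S := by
  rw [locallyIntegrableOn_iff hS.isLocallyClosed] at hu ⊢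
  exact fun k hk hkc => (hu k hk hkc).congr_fun (fun z hz => (h z (hk hz)).symm) hkc.measurableSet

/-- Energy controls oscillation for quasiregular maps. -/
theorem IsQuasiregularOn.norm_sub_le_of_energy_le {K ρ R' R E : ℝ} {f : ℂ → ℂ} (hK : 0 < K)
    (hρ : 0 < ρ) (hρR : ρ < R') (hR : R' < R) (hE : 0 < E)
    (hf : IsQuasiregularOn K f (ball 0 R))
    (hfi : LocallyIntegrableOn (fun z => ‖fderiv ℝ f z‖ ^ 2) (ball 0 R))
    (hfE : ∫ z in closedBall 0 R', ‖fderiv ℝ f z‖ ^ 2 ≤ E) :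
    ∀ z ∈ closedBall (0 : ℂ) ρ, ‖f z - f 0‖ ≤ 16 * √(2 * E / Real.log (R' / ρ)) := by
  have hlog : 0 < Real.log (R' / ρ) := Real.log_pos ((one_lt_div hρ).2 hρR)
  obtain ⟨r, hr, hrE⟩ := exists_circle_energy_le (g := fun z => ‖fderiv ℝ f z‖ ^ 2)
    ((measurable_fderiv ℝ f).norm.pow_const 2) (fun z => by positivity) hρ hρR hE
    (hfi.integrableOn_compact_subset (closedBall_subset_ball hR) (isCompact_closedBall _ _)) hfE
  have hr0 : 0 < r := hρ.trans hr.1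
  have hrR : r < R := hr.2.trans hR
  set τ := √(2 * E / Real.log (R' / ρ)) with hτ
  have hτ0 : 0 < τ := Real.sqrt_pos.2 (by positivity)
  have hτ2 : τ ^ 2 = 2 * E / Real.log (R' / ρ) := Real.sq_sqrt (by positivity)
  rw [← hτ2] at hrE
  have hosc := norm_sub_le_of_circle_energy_le hr0 hτ0
    (fun z hz => (hf z (closedBall_subset_ball hrR (sphere_subset_closedBall hz))).1) hrE
  set p := f (r * exp (-Real.pi * I)) with hp
  have hre : ∀ a : ℂ, ‖a‖ = 1 → ∀ z ∈ closedBall (0 : ℂ) r, (a * (f z - p)).re ≤ 4 * τ := by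
    intro a ha
    refine (hf.const_mul_sub a p).re_le_of_sphere_re_le hK hr0 hrR ?_ fun z hz => ?_
    · exact LocallyIntegrableOn.congr_on isOpen_ball hfi fun z hz => by
        rw [hf.norm_fderiv_const_mul_sub ha p hz]
    · refine (re_le_norm _).trans ?_
      rw [norm_mul, ha, one_mul]
      exact hosc z hz
  have hb : ∀ z ∈ closedBall (0 : ℂ) r, ‖f z - p‖ ≤ 8 * τ := by
    intro z hz
    have h1 := hre 1 (by simp) z hz
    have h2 := hre (-1) (by simp) z hz
    have h3 := hre I (by simp) z hz
    have h4 := hre (-I) (by simp) z hz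
    simp only [one_mul, neg_mul, neg_re, mul_re, I_re, I_im, zero_mul, zero_sub] at h1 h2 h3 h4
    refine (norm_le_abs_re_add_abs_im _).trans ?_
    have h5 : |(f z - p).re| ≤ 4 * τ := abs_le.2 ⟨by linarith, h1⟩
    have h6 : |(f z - p).im| ≤ 4 * τ := abs_le.2 ⟨by linarith, by linarith⟩
    linarith
  intro z hz
  have h1 := hb z (closedBall_subset_closedBall hr.1.le hz)
  have h2 := hb 0 (mem_closedBall_self hr0.le)
  calc ‖f z - f 0‖ = ‖(f z - p) - (f 0 - p)‖ := by congr 1; ring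
    _ ≤ ‖f z - p‖ + ‖f 0 - p‖ := norm_sub_le _ _
    _ ≤ 16 * τ := by linarith

/-- Averaging over discs of radius comparable to a `1`-Lipschitz scale function. -/
theorem lintegral_mul_le_of_scale {g : ℂ → ENNReal} (hg : Measurable g) {D : ℂ → ℝ}
    (hD : LipschitzWith 1 D) {B₀ B₁ : Set ℂ} (hB₀ : MeasurableSet B₀)
    (hB₁ : MeasurableSet B₁) {c : ℝ} (h0 : ∀ x ∈ B₀, 0 < D x)
    (h01 : ∀ x ∈ B₀, ball x (D x / 8) ⊆ B₁)
    (h1 : ∀ y ∈ B₁, 0 < D y ∧ ∫⁻ x in closedBall y (D y / 4), g x ≤ ENNReal.ofReal (c * D y ^ 2)) :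
    (∫⁻ x in B₀, g x) * ENNReal.ofReal (Real.pi / 81) ≤ ENNReal.ofReal c * volume B₁ := by
  let k : ℂ → ℂ → ENNReal := fun x y =>
    (closedBall y (D y / 4)).indicator (fun _ => ENNReal.ofReal (D y ^ 2)⁻¹) x
  have hDc : Continuous D := hD.continuous
  have hkm : Measurable (Function.uncurry k) := by
    have hset : MeasurableSet {q : ℂ × ℂ | dist q.1 q.2 ≤ D q.2 / 4} := by
      refine (isClosed_le ?_ ?_).measurableSet <;> fun_prop
    have hfun : Measurable fun q : ℂ × ℂ => ENNReal.ofReal (D q.2 ^ 2)⁻¹ :=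
      (((hDc.measurable.comp measurable_snd).pow_const 2).inv).ennreal_ofReal
    have : Function.uncurry k = {q : ℂ × ℂ | dist q.1 q.2 ≤ D q.2 / 4}.indicator
        fun q => ENNReal.ofReal (D q.2 ^ 2)⁻¹ := by
      funext ⟨x, y⟩
      simp [k, indicator, Function.uncurry]
    rw [this]
    exact hfun.indicator hset
  have hlow : ∀ x ∈ B₀, ENNReal.ofReal (Real.pi / 81) ≤ ∫⁻ y in B₁, k x y := by
    intro x hx
    have hx0 := h0 x hx
    have hDy : ∀ y ∈ ball x (D x / 8), 7 / 8 * D x < D y ∧ D y < 9 / 8 * D x := by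
      intro y hy
      have h2 : |D y - D x| ≤ dist y x := by
        simpa [Real.dist_eq] using hD.dist_le_mul y x
      rw [mem_ball] at hy
      rw [abs_le] at h2
      constructor <;> linarith
    calc ENNReal.ofReal (Real.pi / 81)
        = ENNReal.ofReal ((9 / 8 * D x) ^ 2)⁻¹ * volume (ball x (D x / 8)) := by
          rw [Complex.volume_ball, ← ENNReal.ofReal_pow (by positivity),
            ← ENNReal.ofReal_coe_nnreal, ← ENNReal.ofReal_mul (by positivity),
            ← ENNReal.ofReal_mul (by positivity)]
          congr 1
          rw [NNReal.coe_real_pi]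
          field_simp
          norm_num
      _ = ∫⁻ _ in ball x (D x / 8), ENNReal.ofReal ((9 / 8 * D x) ^ 2)⁻¹ :=
          (setLIntegral_const _ _).symm
      _ ≤ ∫⁻ y in ball x (D x / 8), k x y := by
          refine setLIntegral_mono' measurableSet_ball fun y hy => ?_
          obtain ⟨a1, a2⟩ := hDy y hy
          have hm : x ∈ closedBall y (D y / 4) := by
            rw [mem_closedBall, dist_comm]
            rw [mem_ball] at hy
            linarith
          simp only [k, indicator_of_mem hm]
          have : 0 < D y := by linarith
          gcongr
      _ ≤ ∫⁻ y in B₁, k x y := lintegral_mono_set (h01 x hx)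
  calc (∫⁻ x in B₀, g x) * ENNReal.ofReal (Real.pi / 81)
      = ∫⁻ x in B₀, g x * ENNReal.ofReal (Real.pi / 81) := (lintegral_mul_const _ hg).symm
    _ ≤ ∫⁻ x in B₀, g x * ∫⁻ y in B₁, k x y :=
        setLIntegral_mono' hB₀ fun x hx => by gcongr; exact hlow x hx
    _ = ∫⁻ x in B₀, ∫⁻ y in B₁, g x * k x y := by
        congr 1
        funext x
        exact (lintegral_const_mul _ (hkm.comp measurable_prodMk_left)).symm
    _ = ∫⁻ y in B₁, ∫⁻ x in B₀, g x * k x y := by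
        refine lintegral_lintegral_swap ?_
        exact ((hg.comp measurable_fst).mul hkm).aemeasurable
    _ ≤ ∫⁻ _ in B₁, ENNReal.ofReal c := by
        refine setLIntegral_mono' hB₁ fun y hy => ?_
        obtain ⟨hy0, hyc⟩ := h1 y hy
        calc ∫⁻ x in B₀, g x * k x y ≤ ∫⁻ x, g x * k x y := setLIntegral_le_lintegral _ _
          _ = ∫⁻ x in closedBall y (D y / 4), g x * ENNReal.ofReal (D y ^ 2)⁻¹ := by
              rw [← lintegral_indicator isClosed_closedBall.measurableSet]
              congr 1
              funext x
              simp [k, indicator]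
          _ = (∫⁻ x in closedBall y (D y / 4), g x) * ENNReal.ofReal (D y ^ 2)⁻¹ :=
              lintegral_mul_const _ hg
          _ ≤ ENNReal.ofReal (c * D y ^ 2) * ENNReal.ofReal (D y ^ 2)⁻¹ := by gcongr
          _ = ENNReal.ofReal c := by
              rw [← ENNReal.ofReal_mul' (by positivity)]
              congr 1
              field_simp
    _ = ENNReal.ofReal c * volume B₁ := setLIntegral_const _ _

/-- A pointwise differentiable function is uniformly Lipschitz at the points of a portion of any
nonempty locally closed set. -/
theorem exists_portion_lipschitz {f : ℂ → ℂ} {S P : Set ℂ} (hPS : P ⊆ S)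
    (hP : IsLocallyClosed P) (hne : P.Nonempty) (hf : ∀ z ∈ S, DifferentiableAt ℝ f z) :
    ∃ x₀ ∈ P, ∃ ρ > 0, ∃ L : ℝ, 0 ≤ L ∧ ∀ p ∈ P, dist p x₀ < ρ → ∀ y ∈ S, dist y p < ρ →
      ‖f y - f p‖ ≤ L * ‖y - p‖ := by
  have : LocallyCompactSpace P := hP.locallyCompactSpace
  have : Nonempty P := hne.to_subtype
  let E : ℕ → Set P := fun n =>
    {p | ∀ y ∈ S, dist y p < 1 / ((n : ℝ) + 1) → ‖f y - f p‖ ≤ n * ‖y - p‖}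
  have hcont : Continuous fun p : P => f p := by
    rw [continuous_iff_continuousAt]
    intro p
    exact ContinuousAt.comp (hf p (hPS p.2)).continuousAt continuousAt_subtype_val
  have hEc : ∀ n, IsClosed (E n) := by
    intro n
    have : E n = ⋂ y ∈ S, ({p : P | 1 / ((n : ℝ) + 1) ≤ dist y p} ∪
        {p : P | ‖f y - f p‖ ≤ n * ‖y - p‖}) := by
      ext p
      simp only [E, mem_ofPred_eq, mem_iInter, mem_union]
      refine forall₂_congr fun y _ => ?_
      rw [← not_lt (b := 1 / ((n : ℝ) + 1)), imp_iff_not_or]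
    rw [this]
    refine isClosed_biInter fun y _ => (isClosed_le ?_ ?_).union (isClosed_le ?_ ?_)
    · fun_prop
    · fun_prop
    · exact (continuous_const.sub hcont).norm
    · fun_prop
  have hEu : ⋃ n, E n = univ := by
    refine eq_univ_of_forall fun p => ?_
    obtain ⟨c, hc⟩ := ((hf p (hPS p.2)).hasFDerivAt.isBigO_sub).bound
    obtain ⟨ε, hε, hb⟩ := Metric.eventually_nhds_iff.1 hc
    obtain ⟨n₁, hn₁⟩ := exists_nat_one_div_lt hε
    obtain ⟨n₂, hn₂⟩ := exists_nat_ge c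
    refine mem_iUnion.2 ⟨max n₁ n₂, fun y _ hy => ?_⟩
    have h1 : 1 / (((max n₁ n₂ : ℕ) : ℝ) + 1) ≤ 1 / ((n₁ : ℝ) + 1) := by
      gcongr
      exact le_max_left _ _
    refine (hb (hy.trans (h1.trans_lt hn₁))).trans ?_
    gcongr
    exact hn₂.trans (by exact_mod_cast le_max_right _ _)
  obtain ⟨n, x, hx⟩ := nonempty_interior_of_iUnion_of_closed hEc hEu
  obtain ⟨ε, hε, hb⟩ := Metric.mem_nhds_iff.1 (mem_interior_iff_mem_nhds.1 hx)
  refine ⟨x, x.2, min ε (1 / ((n : ℝ) + 1)), by positivity, n, by positivity, ?_⟩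
  intro p hp hpx y hy hyp
  exact hb (show (⟨p, hp⟩ : P) ∈ ball x ε from hpx.trans_le (min_le_left _ _)) y hy
    (hyp.trans_le (min_le_right _ _))

/-- Pointwise differentiable quasiregular maps have locally finite Dirichlet energy. -/
theorem IsQuasiregularOn.locallyIntegrableOn_sq_norm_fderiv {K : ℝ} {f : ℂ → ℂ} {S : Set ℂ}
    (hK : 0 < K) (hS : IsOpen S) (hf : IsQuasiregularOn K f S) :
    LocallyIntegrableOn (fun z => ‖fderiv ℝ f z‖ ^ 2) S := by
  set e : ℂ → ℝ := fun z => ‖fderiv ℝ f z‖ ^ 2 with he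
  have hem : Measurable e := (measurable_fderiv ℝ f).norm.pow_const 2
  let G : Set ℂ := {z | IntegrableAtFilter e (𝓝 z)}
  have hGo : IsOpen G := by
    rw [isOpen_iff_mem_nhds]
    rintro z ⟨s, hs, hsi⟩
    obtain ⟨t, hts, hto, hzt⟩ := _root_.mem_nhds_iff.1 hs
    filter_upwards [hto.mem_nhds hzt] with w hw
    exact ⟨t, hto.mem_nhds hw, hsi.mono_set hts⟩
  have hGi : LocallyIntegrableOn e G := fun z hz =>
    IntegrableAtFilter.filter_mono nhdsWithin_le_nhds hz
  suffices h : S ⊆ G from hGi.mono_set h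
  by_contra hSG
  set P : Set ℂ := S \ G with hPdef
  have hne : P.Nonempty := sdiff_nonempty.2 hSG
  have hPl : IsLocallyClosed P := hS.isLocallyClosed.inter hGo.isClosed_compl.isLocallyClosed
  have hPm : MeasurableSet P := hS.measurableSet.diff hGo.measurableSet
  obtain ⟨x₀, hx₀, ρ, hρ, L, hL, hLip⟩ :=
    exists_portion_lipschitz sdiff_subset hPl hne fun z hz => (hf z hz).1
  obtain ⟨η, hη, hηS⟩ := Metric.isOpen_iff.1 hS x₀ hx₀.1
  obtain ⟨s, hs, hsρ, hsη⟩ : ∃ s > 0, 8 * s ≤ ρ ∧ 8 * s ≤ η :=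
    ⟨min ρ η / 8, by positivity, by linarith [min_le_left ρ η], by linarith [min_le_right ρ η]⟩
  obtain ⟨A, hA, hCac⟩ := exists_caccioppoli
  let D : ℂ → ℝ := fun y => infDist y P
  have hDx : ∀ y, D y ≤ dist y x₀ := fun y => infDist_le_dist_of_mem hx₀
  have hDpos : ∀ y ∈ S, y ∉ P → 0 < D y := by
    intro y hy hyP
    have hyG : y ∈ G := by
      by_contra h
      exact hyP ⟨hy, h⟩
    refine (infDist_pos_iff_notMem_closure hne).1 fun hcl => ?_
    obtain ⟨w, hw, hw2⟩ := mem_closure_iff.1 hcl G hGo hyG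
    exact hw2.2 hw
  have hin : ∀ y, dist y x₀ < 8 * s → y ∈ S := fun y hy => hηS (hy.trans_le hsη)
  let c : ℝ := A * K ^ 2 * (3 * L) ^ 2
  have hloc : ∀ y, dist y x₀ < 2 * s → 0 < D y →
      ∫⁻ x in closedBall y (D y / 4), ENNReal.ofReal (e x) ≤ ENNReal.ofReal (c * D y ^ 2) := by
    intro y hy hd
    set d := D y with hd_def
    have hd2 : d < 2 * s := (hDx y).trans_lt hy
    have hbS : ball y d ⊆ S := fun w hw => hin w (by
      have := dist_triangle w y x₀
      rw [mem_ball] at hw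
      linarith)
    have hbG : ball y d ⊆ G := by
      intro w hw
      by_contra h
      have hwP : w ∈ P := ⟨hbS hw, h⟩
      have := infDist_le_dist_of_mem (x := y) hwP
      rw [mem_ball, dist_comm] at hw
      exact absurd (this.trans_lt hw) (lt_irrefl _)
    obtain ⟨p, hpP, hpd⟩ := (infDist_lt_iff hne).1 (by linarith : infDist y P < 2 * d)
    have hpx : dist p x₀ < ρ := by
      have := dist_triangle_left p x₀ y
      linarith
    have hfq : IsQuasiregularOn K (fun z => 1 * (f z - f p)) (ball y d) :=
      IsQuasiregularOn.const_mul_sub (fun z hz => hf z (hbS hz)) 1 (f p)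
    have hfd : ∀ z ∈ ball y d, ‖fderiv ℝ (fun z => 1 * (f z - f p)) z‖ ^ 2 = e z := fun z hz => by
      rw [hf.norm_fderiv_const_mul_sub (by simp) (f p) (hbS hz)]
    have hM : ∀ z ∈ ball y d, |(1 * (f z - f p)).im| ≤ 3 * L * d := by
      intro z hz
      have hzp : dist z p < 3 * d := by
        have := dist_triangle z y p
        rw [mem_ball] at hz
        linarith
      rw [one_mul]
      refine (abs_im_le_norm _).trans ((hLip p hpP hpx z (hbS hz) (by linarith)).trans ?_)
      rw [← dist_eq_norm]
      nlinarith
    have hcb : closedBall y (d / 4) ⊆ ball y d := closedBall_subset_ball (by linarith)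
    have h1 := hCac K (3 * L * d) (d / 2) d y _ hK (by linarith) (by linarith) hfq
      (LocallyIntegrableOn.congr_on isOpen_ball (hGi.mono_set hbG) hfd) hM
    rw [show d / 2 / 2 = d / 4 by ring, setIntegral_congr_fun isClosed_closedBall.measurableSet
      fun z hz => hfd z (hcb hz)] at h1
    have hi : IntegrableOn e (closedBall y (d / 4)) :=
      (hGi.mono_set hbG).integrableOn_compact_subset hcb (isCompact_closedBall _ _)
    rw [← ofReal_integral_eq_lintegral_ofReal hi (Eventually.of_forall fun z => by positivity)]
    refine ENNReal.ofReal_le_ofReal (h1.trans (le_of_eq ?_))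
    simp only [c]
    ring
  have hsB : ∀ {t : ℝ}, t ≤ 8 * s → ball x₀ t ⊆ S := fun ht w hw => hin w (hw.trans_le ht)
  have havg := lintegral_mul_le_of_scale hem.ennreal_ofReal (lipschitz_infDist_pt P)
    (B₀ := ball x₀ s \ P) (B₁ := ball x₀ (2 * s) ∩ {y | 0 < infDist y P}) (c := c)
    (measurableSet_ball.diff hPm)
    (measurableSet_ball.inter (isOpen_lt continuous_const (continuous_infDist_pt P)).measurableSet)
    (fun x hx => hDpos x (hsB (by linarith) hx.1) hx.2)
    (fun x hx y hy => by
      have h1 : D x < s := (hDx x).trans_lt hx.1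
      have h2 := hDpos x (hsB (by linarith) hx.1) hx.2
      have h3 : infDist x P ≤ infDist y P + dist x y := infDist_le_infDist_add_dist
      have h4 := hx.1
      rw [mem_ball] at hy h4
      change dist y x < D x / 8 at hy
      change D x ≤ D y + dist x y at h3
      have h5 := dist_triangle y x x₀
      refine ⟨mem_ball.2 (by linarith), ?_⟩
      change 0 < D y
      rw [dist_comm] at h3
      linarith)
    (fun y hy => ⟨hy.2, hloc y hy.1 hy.2⟩)
  refine hx₀.2 ⟨ball x₀ s, ball_mem_nhds x₀ hs, hem.aestronglyMeasurable, ?_⟩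
  rw [hasFiniteIntegral_iff_ofReal (Eventually.of_forall fun z => by positivity)]
  rw [← lintegral_inter_add_sdiff _ (ball x₀ s) hPm]
  refine ENNReal.add_lt_top.2 ⟨?_, ?_⟩
  · calc ∫⁻ z in ball x₀ s ∩ P, ENNReal.ofReal (e z)
        ≤ ∫⁻ z in ball x₀ s ∩ P, ENNReal.ofReal (L ^ 2) := by
          refine setLIntegral_mono' (measurableSet_ball.inter hPm) fun z hz => ?_
          refine ENNReal.ofReal_le_ofReal (pow_le_pow_left₀ (norm_nonneg _) ?_ 2)
          refine (hf z hz.2.1).1.hasFDerivAt.le_of_lip' hL ?_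
          filter_upwards [hS.mem_nhds hz.2.1, ball_mem_nhds z hρ] with w hw hwz
          refine hLip z hz.2 ?_ w hw hwz
          have := mem_ball.1 hz.1
          linarith
      _ = ENNReal.ofReal (L ^ 2) * volume (ball x₀ s ∩ P) := setLIntegral_const _ _
      _ < ⊤ := ENNReal.mul_lt_top ENNReal.ofReal_lt_top
          ((measure_mono inter_subset_left).trans_lt measure_ball_lt_top)
  · have hfin : ENNReal.ofReal c * volume (ball x₀ (2 * s) ∩ {y | 0 < infDist y P}) < ⊤ :=
      ENNReal.mul_lt_top ENNReal.ofReal_lt_top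
        ((measure_mono inter_subset_left).trans_lt measure_ball_lt_top)
    refine ENNReal.lt_top_of_mul_ne_top_left (havg.trans_lt hfin).ne ?_
    rw [Ne, ENNReal.ofReal_eq_zero, not_le]
    positivity

theorem IsQuasiregularOn.clog_neg {K : ℝ} {f : ℂ → ℂ} {S : Set ℂ} (hf : IsQuasiregularOn K f S)
    (hs : ∀ z ∈ S, -f z ∈ slitPlane) : IsQuasiregularOn K (fun z => log (-f z)) S := by
  refine hf.of_hasFDerivAt_smul fun z hz => ⟨(f z)⁻¹, ?_⟩
  have h1 := (hasDerivAt_log (hs z hz)).hasFDerivAt.restrictScalars ℝ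
  have h0 : HasFDerivAt (fun z => -f z) (-fderiv ℝ f z) z := (hf z hz).1.hasFDerivAt.neg
  have h2 := HasFDerivAt.comp (f := fun z => -f z) z h1 h0
  refine h2.congr_fderiv (ContinuousLinearMap.ext fun v => ?_)
  simp [mul_comm]

/-- Equicontinuity at the centre of quasiregular maps into a strip. -/
theorem exists_radius_norm_sub_le {K M ε R : ℝ} (hK : 0 < K) (hε : 0 < ε) (hR : 0 < R) :
    ∃ r > 0, ∀ f : ℂ → ℂ, IsQuasiregularOn K f (ball 0 R) → (∀ z ∈ ball (0 : ℂ) R, |(f z).im| ≤ M) →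
      ∀ z : ℂ, ‖z‖ < r → ‖f z - f 0‖ ≤ ε := by
  obtain ⟨A, hA, hCac⟩ := exists_caccioppoli
  set E := A * K ^ 2 * M ^ 2 + 1 with hE
  have hE0 : 0 < E := by positivity
  set T := 512 * E / ε ^ 2 with hT
  have hT0 : 0 < T := by positivity
  have hρ : 0 < R / 4 * Real.exp (-T) := by positivity
  refine ⟨R / 4 * Real.exp (-T), hρ, fun f hf hM z hz => ?_⟩
  have hfi := hf.locallyIntegrableOn_sq_norm_fderiv hK isOpen_ball
  have h1 := hCac K M (R / 2) R 0 f hK (by linarith) (by linarith) hf hfi hM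
  rw [show R / 2 / 2 = R / 4 by ring] at h1
  have hlt : R / 4 * Real.exp (-T) < R / 4 :=
    mul_lt_of_lt_one_right (by linarith)
      (by rw [← Real.exp_zero]; exact Real.exp_lt_exp.2 (by linarith))
  have h2 := hf.norm_sub_le_of_energy_le hK hρ hlt (by linarith) hE0 hfi
    (h1.trans (by linarith)) z (mem_closedBall_zero_iff.2 hz.le)
  have h3 : Real.log (R / 4 / (R / 4 * Real.exp (-T))) = T := by
    rw [div_mul_cancel_left₀ (by positivity), Real.exp_neg, inv_inv, Real.log_exp]
  have h4 : 2 * E / T = (ε / 16) ^ 2 := by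
    rw [hT]
    field_simp
    norm_num
  rw [h3, h4, Real.sqrt_sq (by positivity)] at h2
  linarith

theorem re_mul_im_sub_ne_zero {A : ℂ →L[ℝ] ℂ} (hA : ∀ a, A (A a) = -a) {a : ℂ} (ha : a ≠ 0) :
    a.re * (A a).im - (A a).re * a.im ≠ 0 := by
  intro h
  have hr : (A a / a).im = 0 := by
    rw [div_im, ← sub_div, show (A a).im * a.re - (A a).re * a.im = 0 by linarith, zero_div]
  have h1 : A a = (A a / a).re • a := by
    have : ((A a / a).re : ℂ) = A a / a := Complex.ext (by simp) (by simp [hr])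
    rw [real_smul, this, div_mul_cancel₀ _ ha]
  set t := (A a / a).re
  have h2 : -a = (t * t) • a := by
    rw [← hA a, h1, map_smul, h1, smul_smul]
  have h3 : (t * t + 1) • a = 0 := by
    rw [add_smul, one_smul, ← h2, neg_add_cancel]
  rcases smul_eq_zero.1 h3 with h4 | h4
  · nlinarith [mul_self_nonneg t]
  · exact ha h4

theorem norm_le_norm_apply_one_add_norm_apply_I (L : ℂ →L[ℝ] ℂ) : ‖L‖ ≤ ‖L 1‖ + ‖L I‖ := by
  refine L.opNorm_le_bound (by positivity) fun z => ?_
  have : L z = z.re • L 1 + z.im • L I := by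
    rw [← map_smul, ← map_smul, ← map_add]
    congr 1
    simp [re_add_im]
  rw [this]
  refine (norm_add_le _ _).trans ?_
  rw [norm_smul, norm_smul, Real.norm_eq_abs, Real.norm_eq_abs]
  have h1 := mul_le_mul_of_nonneg_right (abs_re_le_norm z) (norm_nonneg (L 1))
  have h2 := mul_le_mul_of_nonneg_right (abs_im_le_norm z) (norm_nonneg (L I))
  linarith

/-- Uniform distortion bound for linear maps intertwining `i` with a structure close to a compact
connected family of positively oriented complex structures. -/
theorem exists_uniform_distortion {X : Type*} [TopologicalSpace X] {Ω : Set X} (hΩ : IsCompact Ω)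
    (hΩc : IsPreconnected Ω) {j : X → ℂ →L[ℝ] ℂ} (hj : ContinuousOn j Ω)
    (hj2 : ∀ x ∈ Ω, ∀ a, j x (j x a) = -a) {x₀ : X} (hx₀ : x₀ ∈ Ω) (hj0 : ∀ a, j x₀ a = I * a) :
    ∃ κ > 0, ∃ K > 0, ∀ x ∈ Ω, ∀ A : ℂ →L[ℝ] ℂ, ‖A - j x‖ ≤ κ → ∀ L : ℂ →L[ℝ] ℂ, L I = A (L 1) →
      ‖L‖ ^ 2 ≤ K * ((L 1).re * (L I).im - (L I).re * (L 1).im) := by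
  let q : X × ℂ → ℝ := fun p => p.2.re * (j p.1 p.2).im - (j p.1 p.2).re * p.2.im
  have hjc : ContinuousOn (fun p : X × ℂ => j p.1 p.2) (Ω ×ˢ sphere (0 : ℂ) 1) :=
    (hj.comp continuousOn_fst fun p hp => hp.1).clm_apply continuousOn_snd
  have hqc : ContinuousOn q (Ω ×ˢ sphere (0 : ℂ) 1) :=
    ((continuous_re.comp_continuousOn continuousOn_snd).mul
      (continuous_im.comp_continuousOn hjc)).sub
      ((continuous_re.comp_continuousOn hjc).mul (continuous_im.comp_continuousOn continuousOn_snd))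
  have hqpos : ∀ x ∈ Ω, ∀ a ∈ sphere (0 : ℂ) 1, 0 < q (x, a) := by
    intro x hx a ha
    have ha0 : a ≠ 0 := by
      rintro rfl
      simp at ha
    by_contra! hneg
    have hc : ContinuousOn (fun x => q (x, a)) Ω :=
      hqc.comp (continuousOn_id.prodMk continuousOn_const) fun y hy => ⟨hy, ha⟩
    have h0 : 0 ≤ q (x₀, a) := by
      simp only [q, hj0]
      simp
      nlinarith [mul_self_nonneg a.re, mul_self_nonneg a.im]
    obtain ⟨y, hy, hy0⟩ := hΩc.intermediate_value hx hx₀ hc ⟨hneg, h0⟩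
    exact re_mul_im_sub_ne_zero (hj2 y hy) ha0 hy0
  obtain ⟨p, hp, hmin⟩ := (hΩ.prod (isCompact_sphere (0 : ℂ) 1)).exists_isMinOn
    ⟨(x₀, 1), hx₀, by simp⟩ hqc
  have hc0 := hqpos p.1 hp.1 p.2 hp.2
  set c := q (p.1, p.2) with hc
  obtain ⟨N, hN⟩ := hΩ.exists_bound_of_continuousOn hj
  have hN0 : 0 ≤ N := (norm_nonneg _).trans (hN x₀ hx₀)
  refine ⟨c / 4, by positivity, (1 + (N + c / 4)) ^ 2 * (2 / c), by positivity, ?_⟩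
  intro x hx A hA L hL
  have hqA : ∀ a, c / 2 * ‖a‖ ^ 2 ≤ a.re * (A a).im - (A a).re * a.im := by
    have hunit : ∀ a ∈ sphere (0 : ℂ) 1, c / 2 ≤ a.re * (A a).im - (A a).re * a.im := by
      intro a ha
      have h1 : c ≤ a.re * (j x a).im - (j x a).re * a.im :=
        hmin (show (x, a) ∈ Ω ×ˢ sphere (0 : ℂ) 1 from ⟨hx, ha⟩)
      rw [mem_sphere_zero_iff_norm] at ha
      have h2 : ‖(A - j x) a‖ ≤ c / 4 := by
        refine ((A - j x).le_opNorm a).trans ?_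
        rwa [ha, mul_one]
      have h3 := (abs_re_le_norm _).trans h2
      have h4 := (abs_im_le_norm _).trans h2
      have h5 := abs_re_le_norm a
      have h6 := abs_im_le_norm a
      rw [ha] at h5 h6
      simp only [_root_.sub_apply, sub_re, sub_im] at h3 h4
      have h7 : |a.re * ((A a).im - (j x a).im)| ≤ 1 * (c / 4) := by
        rw [abs_mul]
        exact mul_le_mul h5 h4 (abs_nonneg _) zero_le_one
      have h8 : |((A a).re - (j x a).re) * a.im| ≤ c / 4 * 1 := by
        rw [abs_mul]
        exact mul_le_mul h3 h6 (abs_nonneg _) (by positivity)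
      rw [abs_le] at h7 h8
      linarith
    intro a
    rcases eq_or_ne a 0 with rfl | ha
    · simp
    · have hn : 0 < ‖a‖ := norm_pos_iff.2 ha
      have h1 := hunit (‖a‖⁻¹ • a) (by
        rw [mem_sphere_zero_iff_norm, norm_smul, norm_inv, norm_norm, inv_mul_cancel₀ hn.ne'])
      simp only [map_smul, smul_re, smul_im, smul_eq_mul] at h1
      have h2 := mul_le_mul_of_nonneg_right h1 (sq_nonneg ‖a‖)
      refine h2.trans (le_of_eq ?_)
      field_simp
  have hAn : ‖A‖ ≤ N + c / 4 := by
    calc ‖A‖ = ‖j x + (A - j x)‖ := by congr 1; abel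
      _ ≤ ‖j x‖ + ‖A - j x‖ := norm_add_le _ _
      _ ≤ N + c / 4 := add_le_add (hN x hx) hA
  have hLn : ‖L‖ ≤ (1 + (N + c / 4)) * ‖L 1‖ := by
    refine (norm_le_norm_apply_one_add_norm_apply_I L).trans ?_
    have : ‖L I‖ ≤ (N + c / 4) * ‖L 1‖ := by
      rw [hL]
      exact (A.le_opNorm _).trans (mul_le_mul_of_nonneg_right hAn (norm_nonneg _))
    linarith
  have h1 := hqA (L 1)
  rw [← hL] at h1
  calc ‖L‖ ^ 2 ≤ ((1 + (N + c / 4)) * ‖L 1‖) ^ 2 := pow_le_pow_left₀ (norm_nonneg _) hLn 2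
    _ = (1 + (N + c / 4)) ^ 2 * (2 / c) * (c / 2 * ‖L 1‖ ^ 2) := by field_simp
    _ ≤ _ := mul_le_mul_of_nonneg_left h1 (by positivity)

theorem norm_sub_le_c2Dist {V G : Type*} [NormedAddCommGroup V] [NormedSpace ℂ V]
    [NormedAddCommGroup G] [NormedSpace ℝ G] {g h : V → G} {W Ω : Set V} (hW : IsOpen W)
    (hΩ : IsCompact Ω) (hΩW : Ω ⊆ W) (hg : ContDiffOn ℝ (⊤ : ℕ∞) g W)
    (hh : ContDiffOn ℝ (⊤ : ℕ∞) h W) {z : V} (hz : z ∈ Ω) : ‖g z - h z‖ ≤ c2Dist g h Ω := by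
  have key : ∀ {k : V → G}, ContDiffOn ℝ (⊤ : ℕ∞) k W →
      ContinuousOn k Ω ∧ ContinuousOn (fderiv ℝ k) Ω ∧ ContinuousOn (fderiv ℝ (fderiv ℝ k)) Ω := by
    intro k hk
    have h1 : ContDiffOn ℝ 1 (fderiv ℝ k) W :=
      hk.fderiv_of_isOpen hW (WithTop.coe_le_coe.2 le_top)
    exact ⟨hk.continuousOn.mono hΩW, h1.continuousOn.mono hΩW,
      (h1.continuousOn_fderiv_of_isOpen hW le_rfl).mono hΩW⟩
  obtain ⟨g0, g1, g2⟩ := key hg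
  obtain ⟨h0, h1, h2⟩ := key hh
  have hc : ContinuousOn (fun x => max ‖g x - h x‖ (max ‖fderiv ℝ g x - fderiv ℝ h x‖
      ‖fderiv ℝ (fderiv ℝ g) x - fderiv ℝ (fderiv ℝ h) x‖)) Ω :=
    (g0.sub h0).norm.sup ((g1.sub h1).norm.sup
      (ContinuousOn.norm (E := V →L[ℝ] V →L[ℝ] G)
        (ContinuousOn.sub (G := V →L[ℝ] V →L[ℝ] G) g2 h2)))
  have hb := hΩ.bddAbove_image hc
  rw [image_eq_range] at hb
  exact (le_max_left _ _).trans (le_ciSup hb ⟨z, hz⟩)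

/-- The first diagonal block of an endomorphism of `ℂ × ℂ`. -/
def fstBlock (A : (ℂ × ℂ) →L[ℝ] ℂ × ℂ) : ℂ →L[ℝ] ℂ :=
  (ContinuousLinearMap.fst ℝ ℂ ℂ).comp (A.comp (ContinuousLinearMap.inl ℝ ℂ ℂ))

/-- The second diagonal block of an endomorphism of `ℂ × ℂ`. -/
def sndBlock (A : (ℂ × ℂ) →L[ℝ] ℂ × ℂ) : ℂ →L[ℝ] ℂ :=
  (ContinuousLinearMap.snd ℝ ℂ ℂ).comp (A.comp (ContinuousLinearMap.inr ℝ ℂ ℂ))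

theorem norm_fstBlock_sub_le (A B : (ℂ × ℂ) →L[ℝ] ℂ × ℂ) :
    ‖fstBlock A - fstBlock B‖ ≤ ‖A - B‖ := by
  refine ContinuousLinearMap.opNorm_le_bound _ (norm_nonneg _) fun a => ?_
  refine (norm_fst_le ((A - B) (a, 0))).trans (((A - B).le_opNorm _).trans (le_of_eq ?_))
  simp [Prod.norm_def]

theorem norm_sndBlock_sub_le (A B : (ℂ × ℂ) →L[ℝ] ℂ × ℂ) :
    ‖sndBlock A - sndBlock B‖ ≤ ‖A - B‖ := by
  refine ContinuousLinearMap.opNorm_le_bound _ (norm_nonneg _) fun a => ?_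
  refine (norm_snd_le ((A - B) (0, a))).trans (((A - B).le_opNorm _).trans (le_of_eq ?_))
  simp [Prod.norm_def]

/-- A split endomorphism acts through its diagonal blocks. -/
theorem eq_blocks_of_split {A : (ℂ × ℂ) →L[ℝ] ℂ × ℂ}
    (hA : ∀ w : ℂ × ℂ, (A (w.1, 0)).2 = 0 ∧ (A (0, w.2)).1 = 0) (w : ℂ × ℂ) :
    A w = (fstBlock A w.1, sndBlock A w.2) := by
  have h1 : A w = A (w.1, 0) + A (0, w.2) := by rw [← map_add]; simp
  rw [h1]
  exact Prod.ext (by simp [fstBlock, (hA w).2]) (by simp [sndBlock, (hA w).1])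

theorem blocks_sq_of_split {A : (ℂ × ℂ) →L[ℝ] ℂ × ℂ}
    (hA : ∀ w : ℂ × ℂ, (A (w.1, 0)).2 = 0 ∧ (A (0, w.2)).1 = 0)
    (h2 : A.comp A = -(ContinuousLinearMap.id ℝ (ℂ × ℂ))) (a : ℂ) :
    fstBlock A (fstBlock A a) = -a ∧ sndBlock A (sndBlock A a) = -a := by
  have h3 : A (A (a, a)) = -(a, a) := congrArg (fun L => L (a, a)) h2
  rw [eq_blocks_of_split hA, eq_blocks_of_split hA] at h3
  exact ⟨congrArg Prod.fst h3, congrArg Prod.snd h3⟩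

/-- The coordinates of discs for split structures near `J` are uniformly quasiregular. -/
theorem exists_quasiregular_coordinates {W : Set (ℂ × ℂ)} (hBW : closedBall (0 : ℂ × ℂ) 1 ⊆ W)
    {J : ℂ × ℂ → (ℂ × ℂ) →L[ℝ] ℂ × ℂ} (hJ : IsACS W J)
    (hsplit : ∀ z ∈ W, ∀ w : ℂ × ℂ, (J z (w.1, 0)).2 = 0 ∧ (J z (0, w.2)).1 = 0)
    (hJ0 : J 0 = Jst (ℂ × ℂ)) :
    ∃ κ > 0, ∃ K > 0, ∀ J' : ℂ × ℂ → (ℂ × ℂ) →L[ℝ] ℂ × ℂ,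
      (∀ z ∈ W, ∀ w : ℂ × ℂ, (J' z (w.1, 0)).2 = 0 ∧ (J' z (0, w.2)).1 = 0) →
      (∀ z ∈ closedBall (0 : ℂ × ℂ) 1, ‖J' z - J z‖ ≤ κ) →
      ∀ g : ℂ → ℂ × ℂ, IsJDisc J' (closedBall (0 : ℂ × ℂ) 1) g →
        IsQuasiregularOn K (fun ζ => (g ζ).1) (ball 0 1) ∧
        IsQuasiregularOn K (fun ζ => (g ζ).2) (ball 0 1) := by
  have hcomp : IsCompact (closedBall (0 : ℂ × ℂ) 1) := isCompact_closedBall _ _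
  have hconn : IsPreconnected (closedBall (0 : ℂ × ℂ) 1) :=
    (convex_closedBall (0 : ℂ × ℂ) 1).isPreconnected
  have hJc : ContinuousOn J (closedBall (0 : ℂ × ℂ) 1) := hJ.smooth.continuousOn.mono hBW
  have h0 : (0 : ℂ × ℂ) ∈ closedBall (0 : ℂ × ℂ) 1 := mem_closedBall_self zero_le_one
  have hblocks : ∀ z ∈ closedBall (0 : ℂ × ℂ) 1, ∀ a,
      fstBlock (J z) (fstBlock (J z) a) = -a ∧ sndBlock (J z) (sndBlock (J z) a) = -a :=
    fun z hz => blocks_sq_of_split (hsplit z (hBW hz)) (hJ.sq z (hBW hz))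
  obtain ⟨κ₁, hκ₁, K₁, hK₁, hD₁⟩ := exists_uniform_distortion hcomp hconn
    (j := fun z => fstBlock (J z))
    (continuousOn_const.clm_comp (hJc.clm_comp continuousOn_const))
    (fun z hz a => (hblocks z hz a).1) h0
    (fun a => by rw [hJ0]; simp [fstBlock, Jst])
  obtain ⟨κ₂, hκ₂, K₂, hK₂, hD₂⟩ := exists_uniform_distortion hcomp hconn
    (j := fun z => sndBlock (J z))
    (continuousOn_const.clm_comp (hJc.clm_comp continuousOn_const))
    (fun z hz a => (hblocks z hz a).2) h0
    (fun a => by rw [hJ0]; simp [sndBlock, Jst])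
  have hmono : ∀ {k k' : ℝ} {x w : ℝ}, 0 < k → k ≤ k' → 0 ≤ x → x ≤ k * w → x ≤ k' * w := by
    intro k k' x w hk hkk hx hxw
    have hw : 0 ≤ w := by
      by_contra! h
      nlinarith
    exact hxw.trans (mul_le_mul_of_nonneg_right hkk hw)
  refine ⟨min κ₁ κ₂, lt_min hκ₁ hκ₂, max K₁ K₂, lt_max_of_lt_left hK₁, ?_⟩
  intro J' hs' hnear g hg
  have hDI : ∀ ζ ∈ ball (0 : ℂ) 1, fderiv ℝ g ζ I = J' (g ζ) (fderiv ℝ g ζ 1) := by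
    intro ζ hζ
    have := congrArg (fun L : ℂ →L[ℝ] ℂ × ℂ => L 1) (hg.2 ζ hζ).2
    simpa [Jst] using this
  constructor
  · intro ζ hζ
    have hgζ := hg.1 hζ
    have hd : HasFDerivAt (fun ζ => (g ζ).1) ((ContinuousLinearMap.fst ℝ ℂ ℂ).comp (fderiv ℝ g ζ))
        ζ := (ContinuousLinearMap.fst ℝ ℂ ℂ).hasFDerivAt.comp ζ (hg.2 ζ hζ).1.hasFDerivAt
    refine ⟨hd.differentiableAt, ?_⟩
    rw [planarJacobian, hd.fderiv]
    refine hmono hK₁ (le_max_left _ _) (sq_nonneg _) (hD₁ (g ζ) hgζ (fstBlock (J' (g ζ)))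
      ((norm_fstBlock_sub_le _ _).trans ((hnear _ hgζ).trans (min_le_left _ _))) _ ?_)
    simp only [ContinuousLinearMap.comp_apply, ContinuousLinearMap.coe_fst', hDI ζ hζ]
    rw [eq_blocks_of_split (hs' _ (hBW hgζ))]
  · intro ζ hζ
    have hgζ := hg.1 hζ
    have hd : HasFDerivAt (fun ζ => (g ζ).2) ((ContinuousLinearMap.snd ℝ ℂ ℂ).comp (fderiv ℝ g ζ))
        ζ := (ContinuousLinearMap.snd ℝ ℂ ℂ).hasFDerivAt.comp ζ (hg.2 ζ hζ).1.hasFDerivAt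
    refine ⟨hd.differentiableAt, ?_⟩
    rw [planarJacobian, hd.fderiv]
    refine hmono hK₂ (le_max_right _ _) (sq_nonneg _) (hD₂ (g ζ) hgζ (sndBlock (J' (g ζ)))
      ((norm_sndBlock_sub_le _ _).trans ((hnear _ hgζ).trans (min_le_right _ _))) _ ?_)
    simp only [ContinuousLinearMap.comp_apply, ContinuousLinearMap.coe_snd', hDI ζ hζ]
    rw [eq_blocks_of_split (hs' _ (hBW hgζ))]

/-- Pointwise consequences of lying in a domain tangent to `Re z₂ = 0` close to the origin. -/
theorem neg_snd_mem_slitPlane_of_lt {C η r : ℝ} {z : ℂ × ℂ} (hC : 0 < C) (hη : 2 * η ≤ 1)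
    (hCη : 2 * C * η ≤ 1 / 8) (hz : ‖z‖ ≤ 2 * η) (hr : r < 0)
    (hform : |r - (z.2.re + ‖z.1‖ ^ 2)| ≤ C * (‖z.2‖ * ‖z‖ + ‖z‖ ^ 3)) :
    -z.2 ∈ slitPlane ∧ ‖z.1‖ ^ 2 ≤ 2 * ‖z.2‖ := by
  have hz2 : ‖z‖ ^ 2 ≤ ‖z.1‖ ^ 2 + ‖z.2‖ := by
    have h2 : ‖z.2‖ ≤ 1 := (norm_snd_le z).trans (hz.trans hη)
    have h3 := norm_nonneg z.2
    rw [Prod.norm_def]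
    rcases max_cases ‖z.1‖ ‖z.2‖ with h | h
    · rw [h.1]; linarith
    · rw [h.1]; nlinarith [sq_nonneg ‖z.1‖]
  have hB : C * (‖z.2‖ * ‖z‖ + ‖z‖ ^ 3) ≤ 1 / 8 * (2 * ‖z.2‖ + ‖z.1‖ ^ 2) := by
    have h1 : ‖z.2‖ * ‖z‖ + ‖z‖ ^ 3 ≤ ‖z‖ * (2 * ‖z.2‖ + ‖z.1‖ ^ 2) := by
      have := mul_le_mul_of_nonneg_left hz2 (norm_nonneg z)
      linarith
    have h2 : C * ‖z‖ ≤ 1 / 8 := by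
      have := mul_le_mul_of_nonneg_left hz hC.le
      linarith
    have h3 : 0 ≤ 2 * ‖z.2‖ + ‖z.1‖ ^ 2 := by positivity
    have := mul_le_mul_of_nonneg_left h1 hC.le
    have := mul_le_mul_of_nonneg_right h2 h3
    linarith
  have hmain : z.2.re + 7 / 8 * ‖z.1‖ ^ 2 < 1 / 4 * ‖z.2‖ := by
    have := (abs_le.1 hform).1
    linarith
  have hre := abs_re_le_norm z.2
  have hsq := sq_nonneg ‖z.1‖
  refine ⟨?_, ?_⟩
  · rw [mem_slitPlane_iff, neg_re, neg_im]
    by_contra! hcon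
    have him : z.2.im = 0 := by linarith [hcon.2]
    have h1 : ‖z.2‖ ≤ |z.2.re| + |z.2.im| := norm_le_abs_re_add_abs_im _
    rw [him, abs_zero, abs_of_nonneg (by linarith [hcon.1])] at h1
    linarith [hcon.1]
  · have := (abs_le.1 hre).1
    linarith

end

/-- **Uniform Schwarz-type lemma on nonisotropic polydiscs.** A `J_ν`-holomorphic disc
entering the nonisotropic polydisc `Q(0,δ) = {|z₁| < √δ, |z₂| < δ}` at its center stays
in `Q(0, C₀δ)` on a fixed smaller disc `r₀Δ`. -/
theorem statement12
    (C : ℝ) (hC : 0 < C)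
    (rν : ℕ → ℂ × ℂ → ℝ)
    (hreg : ∀ ν, ContDiffOn ℝ 2 (rν ν) (closedBall (0 : ℂ × ℂ) 1))
    (hform : ∀ ν, ∀ z ∈ closedBall (0 : ℂ × ℂ) 1,
      |rν ν z - (z.2.re + ‖z.1‖ ^ 2)| ≤ C * (‖z.2‖ * ‖z‖ + ‖z‖ ^ 3))
    (W : Set (ℂ × ℂ)) (hW : IsOpen W) (hBW : closedBall (0 : ℂ × ℂ) 1 ⊆ W)
    (J : ℂ × ℂ → (ℂ × ℂ) →L[ℝ] ℂ × ℂ) (Jν : ℕ → ℂ × ℂ → (ℂ × ℂ) →L[ℝ] ℂ × ℂ)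
    (hJ : IsACS W J) (hJν : ∀ ν, IsACS W (Jν ν))
    (hsplit : ∀ z ∈ W, ∀ w : ℂ × ℂ, (J z (w.1, 0)).2 = 0 ∧ (J z (0, w.2)).1 = 0)
    (hsplitν : ∀ ν, ∀ z ∈ W, ∀ w : ℂ × ℂ,
      (Jν ν z (w.1, 0)).2 = 0 ∧ (Jν ν z (0, w.2)).1 = 0)
    (hJ0 : J 0 = Jst (ℂ × ℂ))
    (hJlip : ∀ z ∈ closedBall (0 : ℂ × ℂ) 1, ‖J z - Jst (ℂ × ℂ)‖ ≤ C * ‖z‖)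
    (hconv : Tendsto (fun ν => c2Dist (Jν ν) J (closedBall (0 : ℂ × ℂ) 1))
      atTop (𝓝 0)) :
    ∃ C₀ > 0, ∃ δ₀ > 0, ∃ r₀ > 0, ∃ ν₀ : ℕ, ∀ δ : ℝ, 0 < δ → δ < δ₀ → ∀ ν ≥ ν₀,
      ∀ g : ℂ → ℂ × ℂ, IsJDisc (Jν ν) {z ∈ ball (0 : ℂ × ℂ) 1 | rν ν z < 0} g →
        ‖(g 0).1‖ < Real.sqrt δ → ‖(g 0).2‖ < δ →
        ∀ ζ : ℂ, ‖ζ‖ < r₀ →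
          ‖(g ζ).1‖ < Real.sqrt (C₀ * δ) ∧ ‖(g ζ).2‖ < C₀ * δ := by
  obtain ⟨κ, hκ, K, hK, hqr⟩ := exists_quasiregular_coordinates hBW hJ hsplit hJ0
  obtain ⟨ν₀, hν₀⟩ := eventually_atTop.1 (hconv.eventually (gt_mem_nhds hκ))
  obtain ⟨η, hη, hη1, hCη⟩ : ∃ η > 0, 2 * η ≤ 1 ∧ 2 * C * η ≤ 1 / 8 := by
    refine ⟨min (1 / 2) (1 / (16 * C)), by positivity,
      by linarith [min_le_left (1 / 2) (1 / (16 * C))], ?_⟩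
    calc 2 * C * min (1 / 2) (1 / (16 * C)) ≤ 2 * C * (1 / (16 * C)) := by
          gcongr
          exact min_le_right _ _
      _ = 1 / 8 := by field_simp; norm_num
  obtain ⟨r₁, hr₁, hosc₁⟩ := exists_radius_norm_sub_le (M := 1) hK hη one_pos
  obtain ⟨r₂, hr₂, hosc₂⟩ := exists_radius_norm_sub_le (M := Real.pi) (R := min r₁ 1) hK one_pos
    (by positivity)
  refine ⟨6, by norm_num, η ^ 2, by positivity, min r₂ (min r₁ 1), by positivity, ν₀, ?_⟩
  intro δ hδ hδη ν hν g hg hg1 hg2 ζ hζ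
  have hdisc : IsJDisc (Jν ν) (closedBall (0 : ℂ × ℂ) 1) g :=
    ⟨fun w hw => ball_subset_closedBall (hg.1 hw).1, hg.2⟩
  obtain ⟨hq1, hq2⟩ := hqr (Jν ν) (hsplitν ν) (fun z hz =>
    (norm_sub_le_c2Dist hW (isCompact_closedBall _ _) hBW (hJν ν).smooth hJ.smooth hz).trans
      (hν₀ ν hν).le) g hdisc
  have hbd : ∀ w ∈ ball (0 : ℂ) 1, ‖g w‖ ≤ 1 := fun w hw =>
    (mem_ball_zero_iff.1 (hg.1 hw).1).le
  have hsmall : ∀ w : ℂ, ‖w‖ < r₁ → ‖w‖ < 1 → ‖g w‖ ≤ 2 * η := by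
    intro w hw _
    have h1 := hosc₁ _ hq1
      (fun w hw => (Complex.abs_im_le_norm _).trans ((norm_fst_le _).trans (hbd w hw))) w hw
    have h2 := hosc₁ _ hq2
      (fun w hw => (Complex.abs_im_le_norm _).trans ((norm_snd_le _).trans (hbd w hw))) w hw
    have h3 : Real.sqrt δ < η := by
      rw [← Real.sqrt_sq hη.le]
      exact Real.sqrt_lt_sqrt hδ.le hδη
    have h4 : δ < η := by nlinarith
    rw [Prod.norm_def]
    refine max_le ?_ ?_
    · have := norm_le_norm_add_norm_sub' (g w).1 (g 0).1
      linarith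
    · have := norm_le_norm_add_norm_sub' (g w).2 (g 0).2
      linarith
  have hpt : ∀ w ∈ ball (0 : ℂ) (min r₁ 1),
      -(g w).2 ∈ Complex.slitPlane ∧ ‖(g w).1‖ ^ 2 ≤ 2 * ‖(g w).2‖ := by
    intro w hw
    rw [mem_ball_zero_iff, lt_min_iff] at hw
    have hgw := hg.1 (mem_ball_zero_iff.2 hw.2)
    exact neg_snd_mem_slitPlane_of_lt hC hη1 hCη (hsmall w hw.1 hw.2) hgw.2
      (hform ν (g w) (ball_subset_closedBall hgw.1))
  have hlog : IsQuasiregularOn K (fun w => Complex.log (-(g w).2)) (ball 0 (min r₁ 1)) :=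
    IsQuasiregularOn.clog_neg (fun w hw => hq2 w (ball_subset_ball (min_le_right _ _) hw))
      fun w hw => (hpt w hw).1
  have hosc := hosc₂ _ hlog (fun w _ => by rw [Complex.log_im]; exact Complex.abs_arg_le_pi _) ζ
    (hζ.trans_le (min_le_left _ _))
  have hζ' : ζ ∈ ball (0 : ℂ) (min r₁ 1) := mem_ball_zero_iff.2 (hζ.trans_le (min_le_right _ _))
  have hpos : ∀ w ∈ ball (0 : ℂ) (min r₁ 1), 0 < ‖(g w).2‖ := fun w hw =>
    norm_pos_iff.2 fun h => Complex.slitPlane_ne_zero (hpt w hw).1 (by rw [h, neg_zero])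
  have h0 := hpos 0 (mem_ball_self (by positivity))
  have hre := (le_abs_self _).trans ((Complex.abs_re_le_norm _).trans hosc)
  rw [Complex.sub_re, Complex.log_re, Complex.log_re, norm_neg, norm_neg] at hre
  have hle : ‖(g ζ).2‖ < 3 * δ := by
    calc ‖(g ζ).2‖ = Real.exp (Real.log ‖(g ζ).2‖) := (Real.exp_log (hpos ζ hζ')).symm
      _ ≤ Real.exp (1 + Real.log ‖(g 0).2‖) := Real.exp_le_exp.2 (by linarith)
      _ = Real.exp 1 * ‖(g 0).2‖ := by rw [Real.exp_add, Real.exp_log h0]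
      _ ≤ 3 * ‖(g 0).2‖ := by
          gcongr
          exact Real.exp_one_lt_d9.le.trans (by norm_num)
      _ < 3 * δ := by linarith
  refine ⟨Real.lt_sqrt_of_sq_lt ?_, by linarith⟩
  linarith [(hpt ζ hζ').2]

end
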